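/- arXiv:2509.05055 — 6 statements merged into one kernel-verified Lean document; each statement's English description precedes it below -/
import Mathlib

section
/- Let T be a tournament on N vertices with a median order v_1, …, v_N, and let j, k, a ≥ 1 be integers satisfying j − ka ≥ 1 and j + a + 1 ≤ N. Then for I = [j − ka, j) and any nonempty subset A ⊆ [j, j + a), the density of edges directed from I to A satisfies d(I, A) ≥ (k − 1)/(2k). -/
/-- A tournament: a digraph in which every pair of distinct vertices is joined
by an edge in exactly one direction, and there are no loops. -/
def Digraph.IsTournament {V : Type*} (T : Digraph V) : Prop :=
  (∀ v : V, ¬ T.Adj v v) ∧ ∀ u v : V, u ≠ v → (T.Adj u v ↔ ¬ T.Adj v u)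

/-- The number of forward edges of `T` under the vertex ordering `v 0, v 1, …`. -/
noncomputable def forwardEdges {V : Type*} {N : ℕ} (T : Digraph V) (v : Fin N ≃ V) : ℕ :=
  Nat.card {p : Fin N × Fin N | p.1 < p.2 ∧ T.Adj (v p.1) (v p.2)}

/-- `v` is a median order of `T`: it maximizes the number of forward edges over all
orderings of the vertices of `T`. -/
def IsMedianOrder {V : Type*} {N : ℕ} (T : Digraph V) (v : Fin N ≃ V) : Prop :=
  ∀ w : Fin N ≃ V, forwardEdges T w ≤ forwardEdges T v

/-- The interval `[lo, hi)` of a vertex ordering `v`, in the paper's 1-indexed notation: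
the set `{v_lo, v_{lo+1}, …, v_{hi-1}}`. -/
def ordInterval {V : Type*} [DecidableEq V] {N : ℕ} (v : Fin N ≃ V) (lo hi : ℕ) :
    Finset V :=
  (Finset.univ.filter (fun p : Fin N => lo ≤ (p : ℕ) + 1 ∧ (p : ℕ) + 1 < hi)).image v

/-- The number of edges directed from `S₁` to `S₂` in a digraph `T`. -/
def eCount {V : Type*} [DecidableEq V] (T : Digraph V) [DecidableRel T.Adj]
    (S₁ S₂ : Finset V) : ℕ :=
  ((S₁ ×ˢ S₂).filter (fun p => T.Adj p.1 p.2)).card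

theorem aux_fwd {V : Type} [Fintype V] [DecidableEq V] {N : ℕ}
    (T : Digraph V) [DecidableRel T.Adj] (v : Fin N ≃ V) (f : Fin N → ℕ)
    (hf : Function.Injective f) :
    forwardEdges T ((Tuple.sort f).trans v) =
      ((Finset.univ : Finset (Fin N × Fin N)).filter
        (fun p => f p.1 < f p.2 ∧ T.Adj (v p.1) (v p.2))).card := by
  have hs : StrictMono (f ∘ Tuple.sort f) :=
    (Tuple.monotone_sort f).strictMono_of_injective (hf.comp (Tuple.sort f).injective)
  unfold forwardEdges
  rw [Nat.card_eq_fintype_card, ← Fintype.card_subtype]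
  refine Fintype.card_congr (Equiv.subtypeEquiv
    ((Tuple.sort f).prodCongr (Tuple.sort f)) ?_)
  rintro ⟨x, y⟩
  have := hs.lt_iff_lt (a := x) (b := y)
  simp only [Function.comp] at this
  simp [this]

theorem aux_in {V : Type} [Fintype V] [DecidableEq V] {N : ℕ}
    (T : Digraph V) [DecidableRel T.Adj] (hT : T.IsTournament)
    (v : Fin N ≃ V) (hmed : IsMedianOrder T v) (l p : Fin N) (hlp : l ≤ p) :
    (p : ℕ) - l ≤ 2 * ((Finset.Ico l p).filter (fun q => T.Adj (v q) (v p))).card := by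
  set f : Fin N → ℕ := fun x => if x = p then 2 * (l : ℕ) else 2 * (x : ℕ) + 1 with hfdef
  have hf : Function.Injective f := by
    intro x y h
    simp only [hfdef] at h
    split_ifs at h with h1 h2 h2
    · rw [h1, h2]
    · omega
    · omega
    · exact Fin.ext (by omega)
  have hg : forwardEdges T v = ((Finset.univ : Finset (Fin N × Fin N)).filter
        (fun p => p.1 < p.2 ∧ T.Adj (v p.1) (v p.2))).card := by
    unfold forwardEdges
    rw [Nat.card_eq_fintype_card, Fintype.card_subtype]
    rfl
  have h := hmed ((Tuple.sort f).trans v)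
  rw [aux_fwd T v f hf, hg, ← Finset.card_sdiff_le_card_sdiff_iff] at h
  have hin : (((Finset.univ : Finset (Fin N × Fin N)).filter
        (fun p => p.1 < p.2 ∧ T.Adj (v p.1) (v p.2))) \ ((Finset.univ : Finset (Fin N × Fin N)).filter
        (fun p => f p.1 < f p.2 ∧ T.Adj (v p.1) (v p.2)))).card ≤
      ((Finset.Ico l p).filter (fun q => T.Adj (v q) (v p))).card := by
    rw [← Finset.card_image_of_injective ((Finset.Ico l p).filter (fun q => T.Adj (v q) (v p)))
      (Prod.mk_left_injective p)]
    apply Finset.card_le_card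
    rintro ⟨x, y⟩ hxy
    simp only [Finset.mem_sdiff, Finset.mem_filter, Finset.mem_univ, true_and, not_and,
      Finset.mem_image, Finset.mem_Ico, Prod.mk.injEq, hfdef] at hxy ⊢
    obtain ⟨⟨h1, h2⟩, h3⟩ := hxy
    have h4 := fun h => h3 h h2
    by_cases hy : y = p
    · subst hy
      refine ⟨x, ⟨⟨?_, h1⟩, h2⟩, rfl, rfl⟩
      rw [if_neg (ne_of_lt h1), if_pos rfl] at h4
      rw [Fin.le_def]; by_contra hc
      exact h4 (by omega)
    · exfalso
      apply h4
      rw [if_neg hy]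
      have h1' : (x : ℕ) < y := h1
      have : (l : ℕ) ≤ p := hlp
      split_ifs with hx
      · subst hx; omega
      · omega
  have hout : ((Finset.Ico l p).filter (fun q => ¬ T.Adj (v q) (v p))).card ≤
      (((Finset.univ : Finset (Fin N × Fin N)).filter
        (fun p => f p.1 < f p.2 ∧ T.Adj (v p.1) (v p.2))) \ ((Finset.univ : Finset (Fin N × Fin N)).filter
        (fun p => p.1 < p.2 ∧ T.Adj (v p.1) (v p.2)))).card := by
    rw [← Finset.card_image_of_injective _ (Prod.mk_right_injective p)]
    apply Finset.card_le_card
    rintro ⟨x, y⟩ hxy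
    simp only [Finset.mem_sdiff, Finset.mem_filter, Finset.mem_univ, true_and, not_and,
      Finset.mem_image, Finset.mem_Ico, Prod.mk.injEq, hfdef] at hxy ⊢
    obtain ⟨q, ⟨⟨h1, h2⟩, h3⟩, rfl, rfl⟩ := hxy
    have hne : p ≠ q := (ne_of_lt h2).symm
    have h1' : (l : ℕ) ≤ q := h1
    refine ⟨⟨?_, (hT.2 _ _ (v.injective.ne hne)).2 h3⟩, fun h => absurd h (not_lt.2 h2.le)⟩
    rw [if_pos rfl, if_neg hne.symm]; omega
  have hsum := Finset.card_filter_add_card_filter_not (s := Finset.Ico l p) (fun q => T.Adj (v q) (v p))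
  rw [Fin.card_Ico] at hsum
  omega

/-- Let `T` be a tournament on `N` vertices with a median order
`v_1, …, v_N`, and let `j, k, a ≥ 1` with `j − ka ≥ 1` and `j + a + 1 ≤ N`.  Then for
`I = [j − ka, j)` and any nonempty `A ⊆ [j, j + a)`, the density of edges from `I` to `A`
is at least `(k − 1)/(2k)`. -/
theorem median_order_density {V : Type} [Fintype V] [DecidableEq V] {N : ℕ}
    (T : Digraph V) [DecidableRel T.Adj] (hT : T.IsTournament)
    (v : Fin N ≃ V) (hmed : IsMedianOrder T v)
    (j k a : ℕ) (hj : 1 ≤ j) (hk : 1 ≤ k) (ha : 1 ≤ a)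
    (h1 : k * a + 1 ≤ j) (h2 : j + a + 1 ≤ N)
    (A : Finset V) (hA : A ⊆ ordInterval v j (j + a)) (hAne : A.Nonempty) :
    ((k : ℝ) - 1) / (2 * k) ≤
      (eCount T (ordInterval v (j - k * a) j) A : ℝ) /
        (((ordInterval v (j - k * a) j).card : ℝ) * (A.card : ℝ)) := by
  have hkpos : (0 : ℝ) < k := by exact_mod_cast hk
  have hka : 1 ≤ k * a := Nat.mul_pos hk ha
  have hcard : (ordInterval v (j - k * a) j).card = k * a := by
    unfold ordInterval
    rw [Finset.card_image_of_injective _ v.injective]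
    have : (Finset.univ.filter (fun p : Fin N => j - k * a ≤ (p : ℕ) + 1 ∧ (p : ℕ) + 1 < j)) =
        Finset.Ico (⟨j - k * a - 1, by omega⟩ : Fin N) ⟨j - 1, by omega⟩ := by
      ext q
      simp only [Finset.mem_filter, Finset.mem_univ, true_and, Finset.mem_Ico, Fin.le_def,
        Fin.lt_def]
      omega
    rw [this, Fin.card_Ico]
    simp only
    omega
  have hvert : ∀ y ∈ A, k * a ≤
      2 * ((ordInterval v (j - k * a) j).filter (fun x => T.Adj x y)).card + a := by
    intro y hy
    have hy' := hA hy
    simp only [ordInterval, Finset.mem_image, Finset.mem_filter, Finset.mem_univ, true_and] at hy'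
    obtain ⟨p, ⟨hp1, hp2⟩, rfl⟩ := hy'
    have hin := aux_in T hT v hmed ⟨j - k * a - 1, by omega⟩ p (by rw [Fin.le_def]; simp only; omega)
    have hsub : ((Finset.Ico (⟨j - k * a - 1, by omega⟩ : Fin N) p).filter
        (fun q => T.Adj (v q) (v p))).image v ⊆
        ((ordInterval v (j - k * a) j).filter (fun x => T.Adj x (v p))) ∪
          (Finset.Ico (⟨j - 1, by omega⟩ : Fin N) p).image v := by
      intro x hx
      simp only [Finset.mem_image, Finset.mem_filter, Finset.mem_Ico, Fin.le_def, Fin.lt_def] at hx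
      obtain ⟨q, ⟨⟨h3, h4⟩, h5⟩, rfl⟩ := hx
      rw [Finset.mem_union]
      by_cases hq : (q : ℕ) + 1 < j
      · left
        refine Finset.mem_filter.2 ⟨Finset.mem_image_of_mem _ ?_, h5⟩
        simp only [Finset.mem_filter, Finset.mem_univ, true_and]
        omega
      · right
        refine Finset.mem_image_of_mem _ ?_
        simp only [Finset.mem_Ico, Fin.le_def, Fin.lt_def]
        omega
    have hc := (Finset.card_le_card hsub).trans (Finset.card_union_le _ _)
    rw [Finset.card_image_of_injective _ v.injective,
      Finset.card_image_of_injective _ v.injective, Fin.card_Ico] at hc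
    simp only at hc hin
    omega
  have hcount : eCount T (ordInterval v (j - k * a) j) A =
      ∑ y ∈ A, ((ordInterval v (j - k * a) j).filter (fun x => T.Adj x y)).card := by
    unfold eCount
    simp only [Finset.card_filter]
    rw [Finset.sum_product_right]
  have htot : A.card * (k * a) ≤ 2 * eCount T (ordInterval v (j - k * a) j) A + A.card * a := by
    have := Finset.sum_le_sum hvert
    rw [Finset.sum_add_distrib, ← Finset.mul_sum A _ 2, ← hcount, Finset.sum_const, Finset.sum_const] at this
    simpa using this
  have hapos : (0 : ℝ) < a := by exact_mod_cast ha
  have hApos : (0 : ℝ) < A.card := by exact_mod_cast hAne.card_pos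
  have htot' : (A.card : ℝ) * (k * a) ≤
      2 * (eCount T (ordInterval v (j - k * a) j) A : ℝ) + A.card * a := by exact_mod_cast htot
  rw [hcard, div_le_div_iff₀ (by positivity) (by push_cast; positivity)]
  push_cast
  nlinarith [mul_le_mul_of_nonneg_left htot' hkpos.le]
end

section
/- Let Δ ≥ 1, w ≥ 1 and s ≥ 0 be integers and let T be a tournament. Let I, B ⊆ V(T) be nonempty disjoint sets with d(I, B) ≥ 1/3 and |B| ≥ 3·3^(6Δw). Then there exist a set A ⊆ I and nested sets B_0 ⊆ B_1 ⊆ ⋯ ⊆ B_w ⊆ B such that: (1) |A| ≥ 3^(−10Δw)·|I|; (2) for every j ∈ [w], 3^(−3Δw)·|B| ≥ |B_j| ≥ 3^(−6Δw)·|B|; and (3) for every j ∈ [w], the number of Δ-element subsets S ⊆ A ∪ B_{j−1} with |N⁺(S) ∩ B_j| ≤ s is at most (3^(8Δw)·s/|B|)^(2Δ)·C(|I ∪ B_{j−1}|, Δ). -/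
/-- The common out-neighborhood of a finite set `X` of vertices of a digraph. -/
def commonOutNbhd {V : Type*} [Fintype V] [DecidableEq V] (T : Digraph V)
    [DecidableRel T.Adj] (X : Finset V) : Finset V :=
  Finset.univ.filter (fun v => ∀ x ∈ X, T.Adj x v)

open Finset

lemma dc {α V : Type*} (X : Finset α) (C : Finset V) (r : α → V → Prop)
    [∀ x v, Decidable (r x v)] (k : ℕ) :
    ∑ T ∈ Fintype.piFinset (fun _ : Fin k => C), (X.filter (fun x => ∀ i, r x (T i))).card
      = ∑ x ∈ X, (C.filter (fun v => r x v)).card ^ k := by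
  classical
  simp_rw [card_filter]
  rw [sum_comm]
  refine sum_congr rfl fun x _ => ?_
  rw [← card_filter, ← card_filter]
  have : (Fintype.piFinset (fun _ : Fin k => C)).filter (fun T => ∀ i, r x (T i))
      = Fintype.piFinset (fun _ : Fin k => C.filter (fun v => r x v)) := by
    ext T
    simp [Fintype.mem_piFinset, forall_and]
  rw [this]
  simp

lemma pm {α : Type*} (X : Finset α) (f : α → ℝ) (hf : ∀ x ∈ X, 0 ≤ f x) (c : ℝ) (hc : 0 ≤ c)
    (k : ℕ) (h : (X.card : ℝ) * c ≤ ∑ x ∈ X, f x) :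
    (X.card : ℝ) * c ^ k ≤ ∑ x ∈ X, f x ^ k := by
  rcases k with _ | k
  · simp
  rcases X.eq_empty_or_nonempty with rfl | hX
  · simp
  have hp : (0:ℝ) < X.card := by exact_mod_cast hX.card_pos
  refine le_trans ?_ (pow_sum_div_card_le_sum_pow hf k)
  rw [le_div_iff₀ (by positivity)]
  calc (X.card : ℝ) * c ^ (k+1) * X.card ^ k = (X.card * c) ^ (k+1) := by ring
    _ ≤ _ := by gcongr

lemma avg {Ω : Type*} (W : Finset Ω) (f g : Ω → ℝ) (F p q mu lam : ℝ) (hF : 0 < F)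
    (hq : 0 ≤ q) (hmu : 0 ≤ mu) (hlam : 0 < lam)
    (hfF : ∀ x ∈ W, f x ≤ F) (hg : ∀ x ∈ W, 0 ≤ g x)
    (h1 : F * p * W.card ≤ ∑ x ∈ W, f x) (h2 : ∑ x ∈ W, g x ≤ mu * W.card)
    (P : Ω → Prop) [DecidablePred P] (hP : ∀ x ∈ W, F * q ≤ f x → g x ≤ lam * mu → P x) :
    (p - q - 1 / lam) * W.card ≤ (W.filter P).card := by
  classical
  have hm : ((W.filter (fun x => lam * mu < g x)).card : ℝ) ≤ 1 / lam * W.card := by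
    rcases hmu.eq_or_lt with h0 | h0
    · have hz : ∑ x ∈ W, g x = 0 := le_antisymm (by simpa [← h0] using h2) (sum_nonneg hg)
      rw [sum_eq_zero_iff_of_nonneg hg] at hz
      have : W.filter (fun x => lam * mu < g x) = ∅ := by
        refine filter_eq_empty_iff.2 fun x hx => ?_
        rw [hz x hx, ← h0]; simp
      rw [this]; simp; positivity
    · have : (lam * mu) * ((W.filter (fun x => lam * mu < g x)).card : ℝ) ≤ mu * W.card := by
        refine le_trans ?_ h2
        refine le_trans ?_ (sum_le_sum_of_subset_of_nonneg (filter_subset (fun x => lam * mu < g x) W)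
          (fun x hx _ => hg x hx))
        rw [mul_comm, ← nsmul_eq_mul]
        exact card_nsmul_le_sum _ _ _ fun x hx => (mem_filter.1 hx).2.le
      rw [one_div, inv_mul_eq_div, le_div_iff₀ hlam]
      refine le_of_mul_le_mul_left ?_ h0
      linarith
  have key : ∑ x ∈ W, f x ≤ ∑ x ∈ W, (F * (if P x then 1 else 0) + F * q
      + F * (if lam * mu < g x then 1 else 0)) := by
    refine sum_le_sum fun x hx => ?_
    have a1 := hfF x hx
    have a2 := hP x hx
    have : 0 ≤ F * q := by positivity
    split_ifs with h3 h4 h4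
    · linarith
    · linarith
    · linarith
    · by_contra h5
      push Not at h4 h5
      exact h3 (a2 (by linarith) h4)
  rw [sum_add_distrib, sum_add_distrib, ← mul_sum, ← mul_sum, ← mul_sum, sum_boole, sum_boole, sum_const,
    nsmul_eq_mul] at key
  refine le_of_mul_le_mul_left ?_ hF
  nlinarith [mul_le_mul_of_nonneg_left hm hF.le]

lemma choose_ratio (D n m : ℕ) (hD : D ≤ m) (K : ℝ) (hK : 0 ≤ K) (h : (n : ℝ) ≤ K * m) :
    (n.choose D : ℝ) ≤ 3 ^ D * K ^ D * m.choose D := by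
  have h1 : (n.choose D : ℝ) ≤ (n:ℝ) ^ D / D.factorial := Nat.choose_le_pow_div D n
  have h2 : m ^ D * D.factorial ≤ D ^ D * m.descFactorial D := by
    rw [← Nat.descFactorial_self D, Nat.descFactorial_eq_prod_range,
      Nat.descFactorial_eq_prod_range]
    rw [← card_range D]
    rw [← prod_const, ← prod_const, card_range, ← prod_mul_distrib, ← prod_mul_distrib]
    refine prod_le_prod' fun i hi => ?_
    have hi := mem_range.1 hi
    zify [hi.le, hi.le.trans hD]
    have : (D : ℤ) ≤ m := by exact_mod_cast hD
    nlinarith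
  have h3 : (D:ℝ) ^ D / D.factorial ≤ 3 ^ D := by
    refine (Real.pow_div_factorial_le_exp (x := (D:ℝ)) (by positivity) D).trans ?_
    rw [← mul_one (D : ℝ), Real.exp_nat_mul]
    have := Real.exp_one_lt_d9
    gcongr
    linarith
  have hf : (0:ℝ) < D.factorial := by exact_mod_cast D.factorial_pos
  rw [Nat.descFactorial_eq_factorial_mul_choose] at h2
  have h2' : (m:ℝ) ^ D ≤ D ^ D * m.choose D := by
    have : (m:ℝ) ^ D * D.factorial ≤ D ^ D * (D.factorial * m.choose D) := by exact_mod_cast h2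
    refine le_of_mul_le_mul_right ?_ hf
    linarith
  calc (n.choose D : ℝ) ≤ (n:ℝ) ^ D / D.factorial := h1
    _ ≤ (K * m) ^ D / D.factorial := by gcongr
    _ = K ^ D * (m:ℝ) ^ D / D.factorial := by rw [mul_pow]
    _ ≤ K ^ D * (D ^ D * m.choose D) / D.factorial := by gcongr
    _ = (D ^ D / D.factorial) * (K ^ D * m.choose D) := by ring
    _ ≤ 3 ^ D * (K ^ D * m.choose D) := by gcongr
    _ = _ := by ring

/-- The bad `D`-sets (few common out-neighbours in `C`) completely joined to the tuple `t`. -/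
def badSets {V : Type} [Fintype V] [DecidableEq V] (T : Digraph V) [DecidableRel T.Adj]
    (D s : ℕ) (I C : Finset V) (t : Fin (2 * D) → V) : Finset (Finset V) :=
  (((I ∪ C).powersetCard D).filter (fun S => (commonOutNbhd T S ∩ C).card ≤ s)).filter
    (fun S => ∀ i, t i ∈ commonOutNbhd T S)

/-- Common in-neighbourhood of a tuple inside `C`. -/
def inN {V : Type} [DecidableEq V] (T : Digraph V) [DecidableRel T.Adj]
    {k : ℕ} (C : Finset V) (t : Fin k → V) : Finset V :=
  C.filter (fun v => ∀ i, T.Adj v (t i))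

/-- Good tuples. -/
def goodT {V : Type} [Fintype V] [DecidableEq V] (T : Digraph V) [DecidableRel T.Adj]
    (D s : ℕ) (I C : Finset V) (t : Fin (2 * D) → V) : Prop :=
  (C.card : ℝ) ≤ 3 ^ (3 * D) * ((inN T C t).card : ℝ) ∧
  ((badSets T D s I C t).card : ℝ) ≤
    3 ^ (3 * D) * (((s : ℝ) / C.card) ^ (2 * D) * ((I ∪ C).card.choose D : ℕ))

lemma tour_sum {V : Type} [DecidableEq V] (T : Digraph V) [DecidableRel T.Adj]
    (hT : T.IsTournament) (C : Finset V) (h3 : 3 ≤ C.card) :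
    (C.card : ℝ) * ((C.card : ℝ) / 3) ≤ ∑ v ∈ C, ((C.filter (fun u => T.Adj v u)).card : ℝ) := by
  have h1 : ∑ v ∈ C, (C.filter (fun u => T.Adj v u)).card
      = ∑ v ∈ C, (C.filter (fun u => T.Adj u v)).card := by
    simp_rw [card_filter]
    exact sum_comm
  have h2 : ∀ v ∈ C, (C.filter (fun u => T.Adj v u)).card + (C.filter (fun u => T.Adj u v)).card + 1
      = C.card := by
    intro v hv
    rw [← card_union_of_disjoint, ← card_erase_add_one hv]
    · congr 2
      ext u
      simp only [mem_union, mem_filter, mem_erase]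
      have a := hT.1 v
      have b := hT.2 u v
      by_cases e : u = v
      · subst e; simp [a]
      · have := b e; tauto
    · rw [disjoint_filter]
      intro u _ h4 h5
      by_cases e : u = v
      · subst e; exact hT.1 _ h4
      · exact ((hT.2 u v e).1 h5) h4
  have h4 := sum_congr rfl h2
  rw [sum_add_distrib, sum_add_distrib, ← h1] at h4
  simp only [sum_const, smul_eq_mul, mul_one] at h4
  rw [← Nat.cast_sum]
  set N := ∑ v ∈ C, (C.filter (fun u => T.Adj v u)).card
  have h5 : (N : ℝ) + N + C.card = C.card * C.card := by exact_mod_cast h4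
  have h6 : (3 : ℝ) ≤ C.card := by exact_mod_cast h3
  nlinarith

lemma step {V : Type} [Fintype V] [DecidableEq V] (T : Digraph V) [DecidableRel T.Adj]
    (hT : T.IsTournament) (D s : ℕ) (hD : 1 ≤ D) (I C : Finset V) (h3 : 3 ≤ C.card)
    [DecidablePred (goodT T D s I C)] :
    (C.card : ℝ) ^ (2 * D) ≤ 3 ^ (3 * D) *
      (((Fintype.piFinset (fun _ : Fin (2 * D) => C)).filter (goodT T D s I C)).card : ℝ) := by
  have hC : (0 : ℝ) < C.card := by exact_mod_cast (by omega : 0 < C.card)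
  have hW : ((Fintype.piFinset (fun _ : Fin (2 * D) => C)).card : ℝ) = (C.card : ℝ) ^ (2 * D) := by
    simp
  have key := avg (Fintype.piFinset (fun _ : Fin (2 * D) => C))
    (fun t => ((inN T C t).card : ℝ)) (fun t => ((badSets T D s I C t).card : ℝ))
    C.card (1 / 3 ^ (2 * D)) (1 / 3 ^ (3 * D))
    (((s : ℝ) / C.card) ^ (2 * D) * ((I ∪ C).card.choose D : ℕ)) (3 ^ (3 * D)) hC
    (by positivity) (by positivity) (by positivity)
    (fun t _ => by exact_mod_cast card_le_card (filter_subset _ _))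
    (fun t _ => by positivity)
    (by
      rw [hW]
      have e := dc C C (fun x v => T.Adj x v) (2 * D)
      have p := pm C (fun v => ((C.filter (fun u => T.Adj v u)).card : ℝ))
        (fun _ _ => by positivity) ((C.card : ℝ) / 3) (by positivity) (2 * D)
        (tour_sum T hT C h3)
      have e' : ∑ t ∈ Fintype.piFinset (fun _ : Fin (2 * D) => C), ((inN T C t).card : ℝ)
        = ∑ v ∈ C, ((C.filter (fun u => T.Adj v u)).card : ℝ) ^ (2 * D) := by
        exact_mod_cast e
      rw [e']
      refine le_trans (le_of_eq ?_) p
      rw [div_pow]; ring)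
    (by
      rw [hW]
      have e := dc (((I ∪ C).powersetCard D).filter (fun S => (commonOutNbhd T S ∩ C).card ≤ s)) C
        (fun S v => v ∈ commonOutNbhd T S) (2 * D)
      have e' : ∑ t ∈ Fintype.piFinset (fun _ : Fin (2 * D) => C), ((badSets T D s I C t).card : ℝ)
        = ∑ S ∈ (((I ∪ C).powersetCard D).filter (fun S => (commonOutNbhd T S ∩ C).card ≤ s)),
          ((C.filter (fun u => u ∈ commonOutNbhd T S)).card : ℝ) ^ (2 * D) := by
        exact_mod_cast e
      rw [e']
      calc _ ≤ ∑ S ∈ (((I ∪ C).powersetCard D).filter (fun S => (commonOutNbhd T S ∩ C).card ≤ s)),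
          (s : ℝ) ^ (2 * D) := by
            refine sum_le_sum fun S hS => ?_
            have h := (mem_filter.1 hS).2
            rw [inter_comm, ← filter_mem_eq_inter] at h
            gcongr
        _ ≤ ((I ∪ C).card.choose D : ℕ) * (s : ℝ) ^ (2 * D) := by
            rw [sum_const, nsmul_eq_mul, ← card_powersetCard]
            gcongr
            exact filter_subset _ _
        _ = _ := by
            rw [div_pow]; field_simp)
    (goodT T D s I C)
    (fun t _ h1 h2 => ⟨by
      rw [mul_one_div, div_le_iff₀ (by positivity)] at h1
      linarith, h2⟩)
  rw [hW] at key
  set G : ℝ := (((Fintype.piFinset (fun _ : Fin (2 * D) => C)).filter (goodT T D s I C)).card : ℝ)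
  have h33 : (3 : ℝ) ≤ 3 ^ D := by
    calc (3:ℝ) = 3 ^ 1 := by norm_num
      _ ≤ 3 ^ D := pow_le_pow_right₀ (by norm_num) hD
  have hp : (1 : ℝ) ≤ 3 ^ (3 * D) * (1 / 3 ^ (2 * D) - 1 / 3 ^ (3 * D) - 1 / 3 ^ (3 * D)) := by
    have : (3:ℝ) ^ (3 * D) * (1 / 3 ^ (2 * D) - 1 / 3 ^ (3 * D) - 1 / 3 ^ (3 * D)) = 3 ^ D - 2 := by
      have : (3:ℝ) ^ (3 * D) = 3 ^ (2 * D) * 3 ^ D := by rw [← pow_add]; congr 1; ring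
      rw [this]; field_simp; ring
    rw [this]; linarith
  calc (C.card : ℝ) ^ (2 * D) = 1 * (C.card : ℝ) ^ (2 * D) := by ring
    _ ≤ (3 ^ (3 * D) * (1 / 3 ^ (2 * D) - 1 / 3 ^ (3 * D) - 1 / 3 ^ (3 * D)))
        * (C.card : ℝ) ^ (2 * D) := by gcongr
    _ = 3 ^ (3 * D) * ((1 / 3 ^ (2 * D) - 1 / 3 ^ (3 * D) - 1 / 3 ^ (3 * D))
        * (C.card : ℝ) ^ (2 * D)) := by ring
    _ ≤ _ := by gcongr

lemma snoc_count {X : Type*} [DecidableEq X] (m : ℕ) (Y : Finset X) (R : (Fin (m + 1) → X) → Prop)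
    [DecidablePred R] :
    ∑ t ∈ Y, ((Fintype.piFinset (fun _ : Fin m => Y)).filter
        (fun g => R (Fin.snoc (α := fun _ => X) g t))).card
      ≤ ((Fintype.piFinset (fun _ : Fin (m + 1) => Y)).filter R).card := by
  rw [card_eq_sum_card_fiberwise (f := fun f : Fin (m + 1) → X => f (Fin.last m)) (t := Y)]
  · refine sum_le_sum fun t ht => ?_
    refine card_le_card_of_injOn (fun g => Fin.snoc (α := fun _ => X) g t) ?_ ?_
    · intro g hg
      simp only [coe_filter, Set.mem_ofPred_eq, Fintype.mem_piFinset, mem_filter] at hg ⊢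
      refine ⟨⟨fun i => ?_, hg.2⟩, by simp⟩
      refine Fin.lastCases ?_ (fun i => ?_) i
      · simpa using ht
      · simpa using hg.1 i
    · intro g _ g' _ h
      funext i
      have := congrFun h i.castSucc
      simpa using this
  · intro f hf
    simp only [coe_filter, Set.mem_ofPred_eq, Fintype.mem_piFinset] at hf
    exact hf.1 _

lemma seqL {V : Type} [Fintype V] [DecidableEq V] (T : Digraph V) [DecidableRel T.Adj]
    (hT : T.IsTournament) (D s : ℕ) (hD : 1 ≤ D) (I : Finset V) (β : ℝ) (hβ : 1 ≤ β) (m : ℕ) :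
    ∀ (C : Finset V) (_ : β * 3 ^ (3 * D * m) ≤ C.card)
    (R : (Fin m → Fin (2 * D) → V) → Prop) [DecidablePred R]
    (_ : (((Fintype.piFinset (fun _ : Fin m => Fintype.piFinset (fun _ : Fin (2 * D) => C))).filter
      R).card : ℝ) * (3 ^ (3 * D)) ^ m < (β ^ (2 * D)) ^ m),
    ∃ (BB : ℕ → Finset V) (t : ℕ → Fin (2 * D) → V), BB m = C ∧
      ¬ R (fun i => t i) ∧ (∀ j, j < m → BB j = inN T (BB (j + 1)) (t j) ∧
        goodT T D s I (BB (j + 1)) (t j) ∧ ∀ i, t j i ∈ BB (j + 1)) ∧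
      (∀ j ≤ m, β * 3 ^ (3 * D * j) ≤ (BB j).card) := by
  classical
  induction m with
  | zero =>
    intro C hC R _ hR
    obtain ⟨v, hv⟩ : C.Nonempty := by
      rw [← card_pos]
      have : (0:ℝ) < C.card := by simp at hC; linarith
      exact_mod_cast this
    refine ⟨fun _ => C, fun _ _ => v, rfl, ?_, by simp, ?_⟩
    · intro h
      simp only [pow_zero, mul_one] at hR
      have : (0 : ℕ) < ((Fintype.piFinset (fun _ : Fin 0 =>
        Fintype.piFinset (fun _ : Fin (2 * D) => C))).filter R).card := by
        rw [card_pos]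
        exact ⟨_, mem_filter.2 ⟨Fintype.mem_piFinset.2 fun i => i.elim0, h⟩⟩
      rw [Nat.cast_lt_one] at hR
      omega
    · intro j hj
      obtain rfl : j = 0 := by omega
      exact hC
  | succ m ih =>
    intro C hC R _ hR
    have hCβ : β ≤ C.card := by
      refine le_trans ?_ hC
      have : (1:ℝ) ≤ 3 ^ (3 * D * (m+1)) := one_le_pow₀ (by norm_num)
      nlinarith
    have h3 : 3 ≤ C.card := by
      have : (3:ℝ) ≤ C.card := by
        refine le_trans ?_ hC
        have : (3:ℝ) ^ 1 ≤ 3 ^ (3 * D * (m+1)) := pow_le_pow_right₀ (by norm_num) (by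
          have : 0 < 3 * D * (m + 1) := by positivity
          omega)
        nlinarith
      exact_mod_cast this
    have hst := step T hT D s hD I C h3
    set Y := Fintype.piFinset (fun _ : Fin (2 * D) => C) with hY
    set ext : (Fin (2 * D) → V) → ℝ := fun t => (((Fintype.piFinset (fun _ : Fin m => Y)).filter
        (fun g => R (Fin.snoc (α := fun _ => Fin (2 * D) → V) g t))).card : ℝ) with hext
    have hex : ∃ t ∈ Y.filter (goodT T D s I C),
        ext t * (3 ^ (3 * D)) ^ m < (β ^ (2 * D)) ^ m := by
      by_contra hcon
      push Not at hcon
      have hsum : ∑ t ∈ Y, ext t ≤ ((Fintype.piFinset (fun _ : Fin (m + 1) => Y)).filter R).card := by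
        simp only [hext]
        exact_mod_cast snoc_count m Y R
      have a1 : ((Y.filter (goodT T D s I C)).card : ℝ) * (β ^ (2 * D)) ^ m
          ≤ (∑ t ∈ Y, ext t) * (3 ^ (3 * D)) ^ m := by
        rw [sum_mul]
        refine le_trans ?_ (sum_le_sum_of_subset_of_nonneg (filter_subset (goodT T D s I C) Y)
          (fun x hx _ => by simp only [hext]; positivity))
        rw [← nsmul_eq_mul]
        exact card_nsmul_le_sum _ _ _ hcon
      have a2 : (β ^ (2 * D)) ^ (m + 1) ≤ ((3:ℝ) ^ (3 * D)) * ((∑ t ∈ Y, ext t) * (3 ^ (3 * D)) ^ m) := by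
        calc (β ^ (2 * D)) ^ (m + 1) = β ^ (2 * D) * (β ^ (2 * D)) ^ m := by ring
          _ ≤ (C.card : ℝ) ^ (2 * D) * (β ^ (2 * D)) ^ m := by gcongr
          _ ≤ (3 ^ (3 * D) * ((Y.filter (goodT T D s I C)).card : ℝ)) * (β ^ (2 * D)) ^ m := by
            gcongr
          _ = 3 ^ (3 * D) * (((Y.filter (goodT T D s I C)).card : ℝ) * (β ^ (2 * D)) ^ m) := by ring
          _ ≤ _ := by gcongr
      have a3 : ((3:ℝ) ^ (3 * D)) * ((∑ t ∈ Y, ext t) * (3 ^ (3 * D)) ^ m) ≤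
          (((Fintype.piFinset (fun _ : Fin (m + 1) => Y)).filter R).card : ℝ) * (3 ^ (3 * D)) ^ (m + 1) := by
        rw [pow_succ, mul_comm, mul_assoc]
        gcongr
      linarith
    obtain ⟨t0, ht0, hlt⟩ := hex
    obtain ⟨ht0Y, hgood⟩ := mem_filter.1 ht0
    have hsub : inN T C t0 ⊆ C := filter_subset _ _
    obtain ⟨BB, t, hBm, hnR, hch, hsz⟩ := ih (inN T C t0) (by
        have h1 := hgood.1
        have : β * 3 ^ (3 * D * (m + 1)) = 3 ^ (3 * D) * (β * 3 ^ (3 * D * m)) := by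
          rw [mul_add, pow_add]; ring
        rw [this] at hC
        exact le_of_mul_le_mul_left (hC.trans h1) (by positivity))
      (fun g => R (Fin.snoc (α := fun _ => Fin (2 * D) → V) g t0)) (by
        refine lt_of_le_of_lt ?_ hlt
        simp only [hext]
        gcongr
        refine Fintype.piFinset_subset _ _ fun _ => Fintype.piFinset_subset _ _ fun _ => hsub)
    refine ⟨fun j => if j = m + 1 then C else BB j, fun j => if j = m then t0 else t j, by simp,
      ?_, ?_, ?_⟩
    · convert hnR using 2
      funext i
      refine Fin.lastCases ?_ (fun i => ?_) i
      · simp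
      · have : (i : ℕ) ≠ m := by omega
        simp [this]
    · intro j hj
      have hj1 : j ≠ m + 1 := by omega
      by_cases e : j = m
      · subst e
        simp only [hj1, if_true, if_false]
        exact ⟨hBm, hgood, fun i => Fintype.mem_piFinset.1 ht0Y i⟩
      · have : j + 1 ≠ m + 1 := by omega
        simp only [hj1, e, this, if_false]
        exact hch j (by omega)
    · intro j hj
      by_cases e : j = m + 1
      · subst e; simpa using hC
      · simp only [e, if_false]
        exact hsz j (by omega)

/-- Tuples whose common in-neighbourhood in `I` is small. -/
def badTup {V : Type} [DecidableEq V] (T : Digraph V) [DecidableRel T.Adj]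
    (D w : ℕ) (I : Finset V) (f : Fin w → Fin (2 * D) → V) : Prop :=
  ((I.filter (fun a => ∀ i l, T.Adj a (f i l))).card : ℝ) * 3 ^ (10 * (D * w)) < I.card

lemma start {V : Type} [DecidableEq V] (T : Digraph V) [DecidableRel T.Adj]
    (D w : ℕ) (I B : Finset V) (hI : I.Nonempty) (hB : B.Nonempty)
    (hd : (1 : ℝ) / 3 ≤ (eCount T I B : ℝ) / ((I.card : ℝ) * (B.card : ℝ)))
    [DecidablePred (badTup T D w I)] :
    ∃ B' ⊆ B, (B.card : ℝ) ≤ 3 ^ (3 * (D * w) + 1) * B'.card ∧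
      (((Fintype.piFinset (fun _ : Fin w =>
        Fintype.piFinset (fun _ : Fin (2 * D) => B'))).filter (badTup T D w I)).card : ℝ)
        * 3 ^ (30 * (D * w) ^ 2) ≤ 3 ^ (3 * (D * w) + 1) * (B.card : ℝ) ^ (2 * (D * w)) := by
  classical
  set x := D * w with hx
  have hIp : (0:ℝ) < I.card := by exact_mod_cast hI.card_pos
  have hBp : (0:ℝ) < B.card := by exact_mod_cast hB.card_pos
  set W := Fintype.piFinset (fun _ : Fin (3 * x) => I) with hWdef
  have hW : (W.card : ℝ) = (I.card : ℝ) ^ (3 * x) := by simp [hWdef]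
  set X := (Fintype.piFinset (fun _ : Fin w =>
        Fintype.piFinset (fun _ : Fin (2 * D) => B))).filter (badTup T D w I) with hX
  have hXc : (X.card : ℝ) ≤ (B.card : ℝ) ^ (2 * x) := by
    have h1 : X.card ≤ _ := card_le_card (filter_subset _ _)
    rw [Fintype.card_piFinset_const, Fintype.card_piFinset_const, ← pow_mul, mul_assoc, ← hx] at h1
    exact_mod_cast h1
  have hec : (B.card : ℝ) * ((I.card : ℝ) / 3) ≤
      ∑ b ∈ B, ((I.filter (fun a => T.Adj a b)).card : ℝ) := by
    have h1 : eCount T I B = ∑ b ∈ B, (I.filter (fun a => T.Adj a b)).card := by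
      unfold eCount
      simp_rw [card_filter]
      rw [sum_product_right]
    rw [← Nat.cast_sum, ← h1]
    rw [le_div_iff₀ (by positivity)] at hd
    linarith
  have key := avg W
    (fun a => ((B.filter (fun b => ∀ i, T.Adj (a i) b)).card : ℝ))
    (fun a => ((X.filter (fun f => ∀ i, ∀ j l, T.Adj (a i) (f j l))).card : ℝ))
    B.card (1 / 3 ^ (3 * x)) (1 / 3 ^ (3 * x + 1))
    ((B.card : ℝ) ^ (2 * x) / 3 ^ (30 * x ^ 2)) (3 ^ (3 * x + 1)) hBp
    (by positivity) (by positivity) (by positivity)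
    (fun t _ => by exact_mod_cast card_le_card (filter_subset _ _))
    (fun t _ => by positivity)
    (by
      rw [hW]
      have e := dc B I (fun b a => T.Adj a b) (3 * x)
      have p := pm B (fun b => ((I.filter (fun a => T.Adj a b)).card : ℝ))
        (fun _ _ => by positivity) ((I.card : ℝ) / 3) (by positivity) (3 * x) hec
      have e' : ∑ a ∈ W, ((B.filter (fun b => ∀ i, T.Adj (a i) b)).card : ℝ)
        = ∑ b ∈ B, ((I.filter (fun a => T.Adj a b)).card : ℝ) ^ (3 * x) := by
        exact_mod_cast e
      rw [e']
      refine le_trans (le_of_eq ?_) p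
      rw [div_pow]; ring)
    (by
      rw [hW]
      have e := dc X I (fun f a => ∀ j l, T.Adj a (f j l)) (3 * x)
      have e' : ∑ a ∈ W, ((X.filter (fun f => ∀ i, ∀ j l, T.Adj (a i) (f j l))).card : ℝ)
        = ∑ f ∈ X, ((I.filter (fun a => ∀ j l, T.Adj a (f j l))).card : ℝ) ^ (3 * x) := by
        exact_mod_cast e
      rw [e']
      calc _ ≤ ∑ f ∈ X, ((I.card : ℝ) / 3 ^ (10 * x)) ^ (3 * x) := by
            refine sum_le_sum fun f hf => ?_
            have h : _ < _ := (mem_filter.1 hf).2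
            gcongr
            rw [le_div_iff₀ (by positivity)]
            exact h.le
        _ = X.card * ((I.card : ℝ) / 3 ^ (10 * x)) ^ (3 * x) := by
            rw [sum_const, nsmul_eq_mul]
        _ ≤ (B.card : ℝ) ^ (2 * x) * ((I.card : ℝ) / 3 ^ (10 * x)) ^ (3 * x) := by gcongr
        _ = _ := by
            have : ((3:ℝ) ^ (10 * x)) ^ (3 * x) = 3 ^ (30 * x ^ 2) := by
              rw [← pow_mul]; congr 1; ring
            rw [div_pow, this]; ring)
    (fun a => (B.card : ℝ) * (1 / 3 ^ (3 * x + 1)) ≤ ((B.filter (fun b => ∀ i, T.Adj (a i) b)).card : ℝ)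
      ∧ ((X.filter (fun f => ∀ i, ∀ j l, T.Adj (a i) (f j l))).card : ℝ) ≤
        3 ^ (3 * x + 1) * ((B.card : ℝ) ^ (2 * x) / 3 ^ (30 * x ^ 2)))
    (fun t _ h1 h2 => ⟨h1, h2⟩)
  have hpos : (0:ℝ) < (1 / 3 ^ (3 * x) - 1 / 3 ^ (3 * x + 1) - 1 / 3 ^ (3 * x + 1)) * W.card := by
    rw [hW]
    have : (1 / 3 ^ (3 * x) - 1 / 3 ^ (3 * x + 1) - 1 / 3 ^ (3 * x + 1) : ℝ) = 1 / 3 ^ (3 * x + 1) := by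
      rw [pow_succ]; field_simp; norm_num
    rw [this]; positivity
  have hne := lt_of_lt_of_le hpos key
  rw [Nat.cast_pos, card_pos] at hne
  obtain ⟨a, ha⟩ := hne
  obtain ⟨-, ha1, ha2⟩ := mem_filter.1 ha
  refine ⟨B.filter (fun b => ∀ i, T.Adj (a i) b), filter_subset _ _, ?_, ?_⟩
  · rw [mul_one_div, div_le_iff₀ (by positivity)] at ha1
    linarith
  · rw [← mul_div_assoc, le_div_iff₀ (by positivity)] at ha2
    refine le_trans ?_ ha2
    gcongr
    intro f hf
    rw [mem_filter] at hf ⊢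
    obtain ⟨hf1, hf2⟩ := hf
    simp only [Fintype.mem_piFinset, mem_filter] at hf1
    refine ⟨mem_filter.2 ⟨?_, hf2⟩, fun i j l => (hf1 j l).2 i⟩
    simp only [Fintype.mem_piFinset]
    exact fun j l => (hf1 j l).1

/-- (Backward step.) -/
theorem backward_step {V : Type} [Fintype V] [DecidableEq V]
    (T : Digraph V) [DecidableRel T.Adj] (hT : T.IsTournament)
    (Δ w s : ℕ) (hΔ : 1 ≤ Δ) (hw : 1 ≤ w)
    (I B : Finset V) (hI : I.Nonempty) (hB : B.Nonempty) (hdisj : Disjoint I B)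
    (hd : (1 : ℝ) / 3 ≤ (eCount T I B : ℝ) / ((I.card : ℝ) * (B.card : ℝ)))
    (hBcard : 3 * 3 ^ (6 * Δ * w) ≤ B.card) :
    ∃ (A : Finset V) (BB : ℕ → Finset V),
      A ⊆ I ∧
      (∀ j : ℕ, 1 ≤ j → j ≤ w → BB (j - 1) ⊆ BB j) ∧ BB w ⊆ B ∧
      ((I.card : ℝ) / (3 : ℝ) ^ (10 * Δ * w) ≤ (A.card : ℝ)) ∧
      (∀ j : ℕ, 1 ≤ j → j ≤ w →
        ((BB j).card : ℝ) ≤ (B.card : ℝ) / (3 : ℝ) ^ (3 * Δ * w) ∧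
        (B.card : ℝ) / (3 : ℝ) ^ (6 * Δ * w) ≤ ((BB j).card : ℝ)) ∧
      (∀ j : ℕ, 1 ≤ j → j ≤ w →
        ((((A ∪ BB (j - 1)).powersetCard Δ).filter
            (fun S => (commonOutNbhd T S ∩ BB j).card ≤ s)).card : ℝ) ≤
          ((3 : ℝ) ^ (8 * Δ * w) * (s : ℝ) / (B.card : ℝ)) ^ (2 * Δ) *
            ((I ∪ BB (j - 1)).card.choose Δ : ℕ)) := by
  classical
  obtain ⟨x, hx⟩ : ∃ x, x = Δ * w := ⟨_, rfl⟩
  have hx1 : 1 ≤ x := hx ▸ Nat.mul_pos hΔ hw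
  have e3 : 3 * Δ * w = 3 * x := by rw [hx]; ring
  have e6 : 6 * Δ * w = 6 * x := by rw [hx]; ring
  have e8 : 8 * Δ * w = 8 * x := by rw [hx]; ring
  have e10 : 10 * Δ * w = 10 * x := by rw [hx]; ring
  rw [e3, e6, e8, e10]
  rw [e6] at hBcard
  have hBr : (3:ℝ) * 3 ^ (6 * x) ≤ B.card := by exact_mod_cast hBcard
  have hBp : (0:ℝ) < B.card := lt_of_lt_of_le (by positivity) hBr
  obtain ⟨B', hB'B, hB'1, hB'2⟩ := start T Δ w I B hI hB hd
  rw [← hx] at hB'1 hB'2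
  obtain ⟨C, hCB', hCle, hCge⟩ : ∃ C ⊆ B', (C.card : ℝ) ≤ B.card / 3 ^ (3 * x) ∧
      (B.card : ℝ) ≤ 3 ^ (3 * x + 1) * C.card := by
    by_cases hc : (B'.card : ℝ) ≤ B.card / 3 ^ (3 * x)
    · exact ⟨B', Subset.refl _, hc, hB'1⟩
    · push Not at hc
      set y := (B.card : ℝ) / 3 ^ (3 * x) with hy
      have hy1 : 1 ≤ y := by
        rw [hy, le_div_iff₀ (by positivity)]
        have : (3:ℝ) ^ (3 * x) ≤ 3 ^ (6 * x) := pow_le_pow_right₀ (by norm_num) (by omega)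
        nlinarith [pow_pos (by norm_num : (0:ℝ) < 3) (6 * x)]
      have hfl : (⌊y⌋₊ : ℝ) ≤ y := Nat.floor_le (by linarith)
      have hle : ⌊y⌋₊ ≤ B'.card := by
        have : (⌊y⌋₊ : ℝ) ≤ B'.card := hfl.trans hc.le
        exact_mod_cast this
      obtain ⟨C, hC, hCc⟩ := exists_subset_card_eq hle
      refine ⟨C, hC, by rw [hCc]; exact hfl, ?_⟩
      have h1 : (1:ℝ) ≤ ⌊y⌋₊ := by exact_mod_cast (Nat.one_le_floor_iff y).2 hy1
      have h2 := Nat.lt_floor_add_one y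
      have hyB : (B.card : ℝ) = 3 ^ (3 * x) * y := by rw [hy]; field_simp
      rw [hCc, hyB, pow_succ, mul_assoc]
      gcongr
      linarith
  set β : ℝ := B.card / 3 ^ (6 * x + 1) with hβ
  have hβ1 : 1 ≤ β := by
    rw [hβ, le_div_iff₀ (by positivity), pow_succ]
    linarith
  have hBβ : (B.card : ℝ) = 3 ^ (6 * x + 1) * β := by rw [hβ]; field_simp
  have hβ0 : 0 < β := by linarith
  clear_value β
  clear hβ
  obtain ⟨BB, t, hBw, hnR, hch, hsz⟩ := seqL T hT Δ s hΔ I β hβ1 w C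
    (by
      rw [e3]
      refine le_of_mul_le_mul_left ?_ (by positivity : (0:ℝ) < 3 ^ (3 * x + 1))
      refine le_trans (le_of_eq ?_) hCge
      rw [hBβ]; ring)
    (badTup T Δ w I) (by
      set M := (((Fintype.piFinset (fun _ : Fin w =>
        Fintype.piFinset (fun _ : Fin (2 * Δ) => C))).filter (badTup T Δ w I)).card : ℝ) with hM
      have hM2 : M * 3 ^ (30 * x ^ 2) ≤ 3 ^ (3 * x + 1) * (B.card : ℝ) ^ (2 * x) := by
        refine le_trans ?_ hB'2
        rw [hM]
        gcongr
        exact Fintype.piFinset_subset _ _ fun _ => Fintype.piFinset_subset _ _ fun _ => hCB'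
      rw [← pow_mul, ← pow_mul, e3, mul_assoc 2 Δ w, ← hx]
      have hβp : (0:ℝ) < β ^ (2 * x) := by positivity
      refine lt_of_mul_lt_mul_right (a := (3:ℝ) ^ (30 * x ^ 2)) ?_ (by positivity)
      calc M * 3 ^ (3 * x) * 3 ^ (30 * x ^ 2) = 3 ^ (3 * x) * (M * 3 ^ (30 * x ^ 2)) := by ring
        _ ≤ 3 ^ (3 * x) * (3 ^ (3 * x + 1) * (B.card : ℝ) ^ (2 * x)) := by gcongr
        _ = β ^ (2 * x) * 3 ^ (12 * x ^ 2 + 8 * x + 1) := by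
            rw [hBβ, mul_pow, ← pow_mul]; ring
        _ < β ^ (2 * x) * 3 ^ (30 * x ^ 2) := by
            gcongr
            · norm_num
            · nlinarith)
  have hmono : ∀ j, j < w → BB j ⊆ BB (j + 1) := fun j hj => by
    rw [(hch j hj).1]; exact filter_subset _ _
  have hdown : ∀ i j, j + i = w → BB j ⊆ BB w := by
    intro i
    induction i with
    | zero => intro j hj; obtain rfl : j = w := by omega
              exact Subset.refl _
    | succ i ih => intro j hj; exact (hmono j (by omega)).trans (ih (j + 1) (by omega))
  refine ⟨I.filter (fun a => ∀ i : Fin w, ∀ l, T.Adj a (t i l)), BB, filter_subset _ _, ?_, ?_, ?_,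
    ?_, ?_⟩
  · intro j h1 h2
    obtain ⟨j, rfl⟩ : ∃ i, j = i + 1 := ⟨j - 1, by omega⟩
    exact hmono j (by omega)
  · rw [hBw]; exact hCB'.trans hB'B
  · rw [div_le_iff₀ (by positivity)]
    unfold badTup at hnR
    rw [← hx] at hnR
    push Not at hnR
    exact hnR
  · intro j h1 h2
    constructor
    · refine le_trans ?_ hCle
      rw [← hBw]
      exact_mod_cast card_le_card (hdown (w - j) j (by omega))
    · refine le_trans ?_ (hsz j h2)
      rw [hBβ, div_le_iff₀ (by positivity), pow_succ]
      have : (3:ℝ) ^ 1 ≤ 3 ^ (3 * Δ * j) := pow_le_pow_right₀ (by norm_num) (by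
        have : 0 < 3 * Δ * j := by positivity
        omega)
      have hb : 0 ≤ β := by linarith
      calc (3:ℝ) ^ (6 * x) * 3 * β = β * 3 ^ 1 * 3 ^ (6 * x) := by ring
        _ ≤ _ := by gcongr
  · intro j h1 h2
    obtain ⟨j, rfl⟩ : ∃ i, j = i + 1 := ⟨j - 1, by omega⟩
    rw [Nat.add_sub_cancel]
    obtain ⟨c1, c2, c3⟩ := hch j (by omega)
    set A := I.filter (fun a => ∀ i : Fin w, ∀ l, T.Adj a (t i l)) with hA
    have hAI : A ⊆ I := filter_subset _ _
    by_cases hm : (I ∪ BB j).card < Δ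
    · have : (A ∪ BB j).powersetCard Δ = ∅ := by
        rw [powersetCard_eq_empty]
        exact lt_of_le_of_lt (card_le_card (union_subset_union_left hAI)) hm
      rw [this]
      simp only [filter_empty, card_empty, Nat.cast_zero]
      positivity
    push Not at hm
    have hsub : ((A ∪ BB j).powersetCard Δ).filter
            (fun S => (commonOutNbhd T S ∩ BB (j + 1)).card ≤ s) ⊆
            badSets T Δ s I (BB (j + 1)) (t j) := by
      intro S hS
      rw [mem_filter, mem_powersetCard] at hS
      obtain ⟨⟨hS1, hS2⟩, hS3⟩ := hS
      unfold badSets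
      rw [mem_filter, mem_filter, mem_powersetCard]
      refine ⟨⟨⟨hS1.trans (union_subset_union hAI (hmono j (by omega))), hS2⟩, hS3⟩, ?_⟩
      intro i
      unfold commonOutNbhd
      rw [mem_filter]
      refine ⟨mem_univ _, fun v hv => ?_⟩
      rcases mem_union.1 (hS1 hv) with h | h
      · exact (mem_filter.1 h).2 ⟨j, by omega⟩ i
      · rw [c1] at h
        exact (mem_filter.1 h).2 i
    have hn : (((I ∪ BB (j + 1)).card : ℕ) : ℝ) ≤ 3 ^ (3 * Δ) * ((I ∪ BB j).card : ℕ) := by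
      have d : ∀ i, i ≤ w → Disjoint I (BB i) := fun i hi =>
        hdisj.mono_right (((hdown (w - i) i (by omega)).trans hBw.subset).trans (hCB'.trans hB'B))
      rw [card_union_of_disjoint (d _ h2), card_union_of_disjoint (d j (by omega))]
      have g1 := c2.1
      rw [← c1] at g1
      push_cast
      have : (1:ℝ) ≤ 3 ^ (3 * Δ) := one_le_pow₀ (by norm_num)
      nlinarith [(Nat.cast_nonneg I.card : (0:ℝ) ≤ I.card)]
    have hcr := choose_ratio Δ _ _ hm (3 ^ (3 * Δ)) (by positivity) hn
    have hq : (s : ℝ) / (BB (j + 1)).card * 3 ^ (2 * Δ) ≤ 3 ^ (6 * x) * s / B.card := by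
      have h4 : β * 3 ^ (3 * Δ * (j + 1)) ≤ (BB (j + 1)).card := hsz _ h2
      have hb : 0 < β := by linarith
      have h5 : (3:ℝ) ^ (2 * Δ + 1) ≤ 3 ^ (3 * Δ * (j + 1)) :=
        pow_le_pow_right₀ (by norm_num) (by nlinarith [Nat.zero_le (Δ * j)])
      have h6 : β * 3 ^ (2 * Δ + 1) ≤ (BB (j + 1)).card := le_trans (by gcongr) h4
      calc (s : ℝ) / (BB (j + 1)).card * 3 ^ (2 * Δ) ≤ s / (β * 3 ^ (2 * Δ + 1)) * 3 ^ (2 * Δ) := by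
            gcongr
        _ = _ := by
            rw [hBβ, pow_succ, pow_succ]; field_simp
    have hs0 : (0:ℝ) ≤ (s : ℝ) / (BB (j + 1)).card := by positivity
    have hq2 : ((s : ℝ) / (BB (j + 1)).card) ^ (2 * Δ) * 3 ^ (4 * Δ ^ 2) ≤
        (3 ^ (6 * x) * s / B.card) ^ (2 * Δ) := by
      calc _ = ((s : ℝ) / (BB (j + 1)).card * 3 ^ (2 * Δ)) ^ (2 * Δ) := by
            rw [mul_pow, ← pow_mul]; congr 2; ring
        _ ≤ _ := by gcongr
    set K : ℝ := (((I ∪ BB j).card.choose Δ : ℕ) : ℝ) with hK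
    calc _ ≤ ((badSets T Δ s I (BB (j + 1)) (t j)).card : ℝ) := by
          exact_mod_cast card_le_card hsub
      _ ≤ _ := c2.2
      _ ≤ 3 ^ (3 * Δ) * (((s : ℝ) / (BB (j + 1)).card) ^ (2 * Δ) *
            (3 ^ Δ * (3 ^ (3 * Δ)) ^ Δ * K)) := by gcongr
      _ = ((s : ℝ) / (BB (j + 1)).card) ^ (2 * Δ) * 3 ^ (4 * Δ + 3 * Δ ^ 2) * K := by
          rw [← pow_mul]; ring
      _ ≤ ((s : ℝ) / (BB (j + 1)).card) ^ (2 * Δ) * 3 ^ (4 * Δ ^ 2 + 2 * x * (2 * Δ)) * K := by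
          have : (3:ℝ) ^ (4 * Δ + 3 * Δ ^ 2) ≤ 3 ^ (4 * Δ ^ 2 + 2 * x * (2 * Δ)) :=
            pow_le_pow_right₀ (by norm_num) (by nlinarith)
          gcongr _ * ?_ * _
      _ = (((s : ℝ) / (BB (j + 1)).card) ^ (2 * Δ) * 3 ^ (4 * Δ ^ 2)) * 3 ^ (2 * x * (2 * Δ)) * K := by
          rw [pow_add]; ring
      _ ≤ (3 ^ (6 * x) * s / B.card) ^ (2 * Δ) * 3 ^ (2 * x * (2 * Δ)) * K := by gcongr
      _ = (3 ^ (8 * x) * s / B.card) ^ (2 * Δ) * K := by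
          rw [pow_mul 3 (2 * x), ← mul_pow]
          congr 2
          have : (3:ℝ) ^ (8 * x) = 3 ^ (6 * x) * 3 ^ (2 * x) := by rw [← pow_add]; congr 1; ring
          rw [this]; ring
end

section
/- Let D be a bipartite graph with vertex classes W₁ and W₂, and let Δ⁺, Δ⁻ ≥ 1 be integers such that every vertex in W₁ has degree at most Δ⁺ and every vertex in W₂ has degree at most Δ⁻. Let a, b be positive integers with a ≥ b ≥ 32·|W₁|, and let A be a set of size |A| = a. For each v ∈ W₂, let F_v be a family of subsets of A such that the number of |N_D(v)|-element members of F_v is at most (1/(4Δ⁺Δ⁻))·(2^(−1/2)·b/a)^{|N_D(v)|}·C(a, |N_D(v)|). Let f : W₁ → 2^A be a function with |f(u)| ≥ b for each u ∈ W₁. Then there exists an injective function φ : W₁ → A such that φ(u) ∈ f(u) for every u ∈ W₁, and for every v ∈ W₂ the image set φ(N_D(v)) is not a member of F_v. -/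
/-- The neighborhood in `W₁` of a vertex `v ∈ W₂` of a bipartite graph given by the
adjacency relation `Adj : W₁ → W₂ → Prop`. -/
def leftNbhd {W₁ W₂ : Type*} [Fintype W₁] (Adj : W₁ → W₂ → Prop)
    [∀ u v, Decidable (Adj u v)] (v : W₂) : Finset W₁ :=
  Finset.univ.filter (fun u => Adj u v)

/-- The neighborhood in `W₂` of a vertex `u ∈ W₁` of a bipartite graph given by the
adjacency relation `Adj : W₁ → W₂ → Prop`. -/
def rightNbhd {W₁ W₂ : Type*} [Fintype W₂] (Adj : W₁ → W₂ → Prop)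
    [∀ u v, Decidable (Adj u v)] (u : W₁) : Finset W₂ :=
  Finset.univ.filter (fun v => Adj u v)


namespace FwdStep

open Finset Classical

/-- Good partial maps on `U`, extended by the constant `d` outside `U`. -/
noncomputable def good {W₁ W₂ α : Type} [Fintype W₁]
    (N : W₂ → Finset W₁) (F : W₂ → Set (Finset α)) (f : W₁ → Finset α) (d : α)
    (U : Finset W₁) : Finset (W₁ → α) :=
  (Fintype.piFinset (fun u => if u ∈ U then f u else {d})).filter
    (fun φ => Set.InjOn φ (U : Set W₁) ∧ ∀ v, N v ⊆ U → (N v).image φ ∉ F v)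

lemma mem_good {W₁ W₂ α : Type} [Fintype W₁]
    {N : W₂ → Finset W₁} {F : W₂ → Set (Finset α)} {f : W₁ → Finset α} {d : α}
    {U : Finset W₁} {φ : W₁ → α} :
    φ ∈ good N F f d U ↔ (∀ u ∈ U, φ u ∈ f u) ∧ (∀ u, u ∉ U → φ u = d) ∧
      Set.InjOn φ (U : Set W₁) ∧ ∀ v, N v ⊆ U → (N v).image φ ∉ F v := by
  unfold good
  rw [mem_filter, Fintype.mem_piFinset]
  constructor
  · rintro ⟨h, h2⟩
    refine ⟨fun u hu => ?_, fun u hu => ?_, h2⟩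
    · have := h u; rwa [if_pos hu] at this
    · have := h u; rw [if_neg hu] at this; simpa using this
  · rintro ⟨h, h', h2⟩
    refine ⟨fun u => ?_, h2⟩
    by_cases hu : u ∈ U
    · rw [if_pos hu]; exact h u hu
    · rw [if_neg hu, h' u hu]; simp

/-- Bad tuples on `K`. -/
noncomputable def tup {W₁ α : Type} [Fintype W₁] (K : Finset W₁) (A : Finset α)
    (Fk : Finset (Finset α)) (d : α) : Finset (W₁ → α) :=
  (Fintype.piFinset (fun u => if u ∈ K then A else {d})).filter
    (fun φ => Set.InjOn φ (K : Set W₁) ∧ K.image φ ∈ Fk)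

lemma mem_tup {W₁ α : Type} [Fintype W₁] {K : Finset W₁} {A : Finset α}
    {Fk : Finset (Finset α)} {d : α} {φ : W₁ → α} :
    φ ∈ tup K A Fk d ↔ (∀ u ∈ K, φ u ∈ A) ∧ (∀ u, u ∉ K → φ u = d) ∧
      Set.InjOn φ (K : Set W₁) ∧ K.image φ ∈ Fk := by
  unfold tup
  rw [mem_filter, Fintype.mem_piFinset]
  constructor
  · rintro ⟨h, h2⟩
    refine ⟨fun u hu => ?_, fun u hu => ?_, h2⟩
    · have := h u; rwa [if_pos hu] at this
    · have := h u; rw [if_neg hu] at this; simpa using this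
  · rintro ⟨h, h', h2⟩
    refine ⟨fun u => ?_, h2⟩
    by_cases hu : u ∈ K
    · rw [if_pos hu]; exact h u hu
    · rw [if_neg hu, h' u hu]; simp

lemma card_tup {W₁ α : Type} [Fintype W₁] (K : Finset W₁) (A : Finset α)
    (Fk : Finset (Finset α)) (d : α) (hF : ∀ S ∈ Fk, S.card = K.card) :
    (tup K A Fk d).card ≤ K.card.factorial * Fk.card := by
  refine Finset.card_le_mul_card_image_of_maps_to (f := fun φ => K.image φ) ?_ _ ?_
  · intro φ hφ
    exact (mem_tup.1 hφ).2.2.2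
  · intro S hS
    have hE : Fintype.card (K ↪ S) = K.card.factorial := by
      rw [Fintype.card_embedding_eq]
      simp [hF S hS, Nat.descFactorial_self]
    rw [← hE, ← Finset.card_univ]
    set T := (tup K A Fk d).filter (fun φ => K.image φ = S) with hT
    have hm : ∀ φ ∈ T, (∀ u, u ∉ K → φ u = d) ∧ Set.InjOn φ (K : Set W₁) ∧
        ∀ u ∈ K, φ u ∈ S := by
      intro φ hφ
      rw [hT, mem_filter, mem_tup] at hφ
      refine ⟨hφ.1.2.1, hφ.1.2.2.1, fun u hu => ?_⟩
      rw [← hφ.2]; exact mem_image_of_mem _ hu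
    refine Finset.card_le_card_of_injOn
      (fun φ => if h : φ ∈ T then
        (⟨fun u => ⟨φ u, (hm φ h).2.2 u u.2⟩, fun x y hxy =>
          Subtype.ext ((hm φ h).2.1 x.2 y.2 (by simpa using hxy))⟩ : K ↪ S)
        else Classical.choice (by
          have : 0 < Fintype.card (K ↪ S) := by rw [hE]; exact Nat.factorial_pos _
          exact Fintype.card_pos_iff.1 this)) (fun _ _ => by simp) ?_
    intro φ hφ ψ hψ h
    have hφ' : φ ∈ T := hφ
    have hψ' : ψ ∈ T := hψ
    simp only [dif_pos hφ', dif_pos hψ'] at h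
    funext u
    by_cases hu : u ∈ K
    · have := congrArg (fun e : K ↪ S => ((e ⟨u, hu⟩ : S) : α)) h
      exact this
    · rw [(hm φ hφ').1 u hu, (hm ψ hψ').1 u hu]

/-- Bad extensions at `v`. -/
lemma card_bad {W₁ W₂ α : Type} [Fintype W₁]
    (N : W₂ → Finset W₁) (F : W₂ → Set (Finset α)) (f : W₁ → Finset α) (d : α)
    (A : Finset α) (hfA : ∀ u, f u ⊆ A) (Fk : Finset (Finset α)) (U : Finset W₁) (u : W₁)
    (hu : u ∉ U) (v : W₂) (huv : u ∈ N v)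
    (hFk : ∀ S, S ∈ F v → S.card = (N v).card → S ∈ Fk) :
    ((good N F f d U ×ˢ f u).filter (fun p => N v ⊆ insert u U ∧
      Set.InjOn (Function.update p.1 u p.2) (insert u U : Finset W₁) ∧
      (N v).image (Function.update p.1 u p.2) ∈ F v)).card ≤
    (good N F f d (U \ N v)).card * (tup (N v) A Fk d).card := by
  rw [← card_product]
  refine Finset.card_le_card_of_injOn
    (fun p => (fun w => if w ∈ N v then d else p.1 w,
      fun w => if w ∈ N v then Function.update p.1 u p.2 w else d)) ?_ ?_
  · rintro ⟨φ, x⟩ hp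
    simp only [coe_filter, Set.mem_ofPred_eq, mem_product, mem_good] at hp
    obtain ⟨⟨⟨h1, h2, h3, h4⟩, hx⟩, hN, hinj, hF⟩ := hp
    simp only [coe_product, Set.mem_prod, mem_coe, mem_good, mem_tup]
    refine ⟨⟨?_, ?_, ?_, ?_⟩, ?_, ?_, ?_, ?_⟩
    · intro w hw
      rw [mem_sdiff] at hw
      rw [if_neg hw.2]; exact h1 w hw.1
    · intro w hw
      split_ifs with h
      · rfl
      · exact h2 w (fun h' => hw (mem_sdiff.2 ⟨h', h⟩))
    · intro w hw w' hw' h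
      simp only [mem_coe, mem_sdiff] at hw hw'
      simp only [if_neg hw.2, if_neg hw'.2] at h
      exact h3 hw.1 hw'.1 h
    · intro v' hv' hmem
      apply h4 v' (hv'.trans sdiff_subset)
      convert hmem using 1
      apply image_congr
      intro w hw
      have := mem_sdiff.1 (hv' hw)
      simp only [if_neg this.2]
    · intro w hw
      rw [if_pos hw]
      by_cases h : w = u
      · subst h; simpa using hfA _ hx
      · rw [Function.update_of_ne h]
        exact hfA w (h1 w ((mem_insert.1 (hN hw)).resolve_left h))
    · intro w hw
      rw [if_neg hw]
    · intro w hw w' hw' h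
      have hw1 : w ∈ N v := hw
      have hw1' : w' ∈ N v := hw'
      simp only [if_pos hw1, if_pos hw1'] at h
      exact hinj (hN hw) (hN hw') h
    · have : (N v).image (fun w => if w ∈ N v then Function.update φ u x w else d) =
          (N v).image (Function.update φ u x) := by
        apply image_congr
        intro w hw
        have hw1 : w ∈ N v := hw
        simp only [if_pos hw1]
      rw [this]
      apply hFk _ hF
      apply card_image_of_injOn
      exact hinj.mono (by exact_mod_cast hN)
  · rintro ⟨φ, x⟩ hp ⟨ψ, y⟩ hq h
    simp only [coe_filter, Set.mem_ofPred_eq, mem_product, mem_good] at hp hq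
    simp only [Prod.mk.injEq] at h
    obtain ⟨h1, h2⟩ := h
    have hxy : x = y := by
      have := congrFun h2 u
      simpa [huv] using this
    have : φ = ψ := by
      funext w
      by_cases hw : w ∈ N v
      · by_cases h : w = u
        · subst h
          rw [hp.1.1.2.1 w hu, hq.1.1.2.1 w hu]
        · have := congrFun h2 w
          simpa [hw, h] using this
      · have := congrFun h1 w
        simpa [hw] using this
    rw [this, hxy]

lemma card_step {W₁ W₂ α : Type} [Fintype W₁]
    (N : W₂ → Finset W₁) (F : W₂ → Set (Finset α)) (f : W₁ → Finset α) (d : α)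
    (U : Finset W₁) (u : W₁) (hu : u ∉ U) (R : Finset W₂) (hR : ∀ v, u ∈ N v → v ∈ R) :
    (good N F f d U).card * (f u).card ≤
      (good N F f d (insert u U)).card + (good N F f d U).card * U.card +
      ∑ v ∈ R.filter (fun v => u ∈ N v),
        ((good N F f d U ×ˢ f u).filter (fun p => N v ⊆ insert u U ∧
      Set.InjOn (Function.update p.1 u p.2) (insert u U : Finset W₁) ∧
      (N v).image (Function.update p.1 u p.2) ∈ F v)).card := by
  set G := good N F f d U with hG
  set B := fun v => (G ×ˢ f u).filter (fun p => N v ⊆ insert u U ∧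
      Set.InjOn (Function.update p.1 u p.2) (insert u U : Finset W₁) ∧
      (N v).image (Function.update p.1 u p.2) ∈ F v) with hB
  set P := (G ×ˢ f u).filter
    (fun p => Function.update p.1 u p.2 ∈ good N F f d (insert u U)) with hP
  set Q := (G ×ˢ U).image (fun p => (p.1, p.1 p.2)) with hQ
  have hcov : G ×ˢ f u ⊆ P ∪ Q ∪ (R.filter (fun v => u ∈ N v)).biUnion B := by
    rintro ⟨φ, x⟩ hp
    by_contra hcon
    simp only [mem_union, not_or] at hcon
    obtain ⟨⟨hnP, hnQ⟩, hnB⟩ := hcon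
    apply hnP
    rw [hP, mem_filter]
    refine ⟨hp, ?_⟩
    have hp' := hp
    rw [mem_product, hG, mem_good] at hp'
    obtain ⟨⟨h1, h2, h3, h4⟩, hx⟩ := hp'
    have hxU : ∀ w ∈ U, φ w ≠ x := by
      intro w hw h
      apply hnQ
      rw [hQ, mem_image]
      exact ⟨(φ, w), mem_product.2 ⟨(mem_product.1 hp).1, hw⟩, by simp [h]⟩
    have hne : ∀ w ∈ U, w ≠ u := fun w hw h => hu (h ▸ hw)
    have hinj : Set.InjOn (Function.update φ u x) (insert u U : Finset W₁) := by
      intro w hw w' hw' h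
      rw [mem_coe, mem_insert] at hw hw'
      rcases hw with rfl | hw <;> rcases hw' with rfl | hw'
      · rfl
      · rw [Function.update_self, Function.update_of_ne (hne _ hw')] at h
        exact absurd h.symm (hxU _ hw')
      · rw [Function.update_self, Function.update_of_ne (hne _ hw)] at h
        exact absurd h (hxU _ hw)
      · rw [Function.update_of_ne (hne _ hw), Function.update_of_ne (hne _ hw')] at h
        exact h3 hw hw' h
    refine mem_good.2 ⟨?_, ?_, hinj, ?_⟩
    · intro w hw
      rcases mem_insert.1 hw with rfl | hw
      · simpa using hx
      · simpa [Function.update_of_ne (hne _ hw)] using h1 w hw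
    · intro w hw
      rw [mem_insert, not_or] at hw
      simpa [Function.update_of_ne hw.1] using h2 w hw.2
    · intro v hv hF
      by_cases huv : u ∈ N v
      · apply hnB
        rw [mem_biUnion]
        exact ⟨v, mem_filter.2 ⟨hR v huv, huv⟩, mem_filter.2 ⟨hp, hv, hinj, hF⟩⟩
      · have hvU : N v ⊆ U := fun w hw =>
          (mem_insert.1 (hv hw)).resolve_left (fun h => huv (h ▸ hw))
        apply h4 v hvU
        convert hF using 1
        apply image_congr
        intro w hw
        exact (Function.update_of_ne (hne _ (hvU hw)) _ _).symm
  have hPc : P.card ≤ (good N F f d (insert u U)).card := by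
    refine Finset.card_le_card_of_injOn (fun p => Function.update p.1 u p.2) ?_ ?_
    · intro p hp
      exact (mem_filter.1 hp).2
    · rintro ⟨φ, x⟩ hp ⟨ψ, y⟩ hq h
      have hφ := (mem_good.1 (mem_product.1 (mem_filter.1 hp).1).1).2.1 u hu
      have hψ := (mem_good.1 (mem_product.1 (mem_filter.1 hq).1).1).2.1 u hu
      simp only at h hφ hψ
      have hxy : x = y := by simpa using congrFun h u
      have : φ = ψ := by
        funext w
        by_cases hw : w = u
        · rw [hw, hφ, hψ]
        · simpa [hw] using congrFun h w
      rw [this, hxy]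
  have hQc : Q.card ≤ G.card * U.card := by
    rw [← card_product]; exact card_image_le
  calc G.card * (f u).card = (G ×ˢ f u).card := (card_product _ _).symm
    _ ≤ _ := card_le_card hcov
    _ ≤ (P ∪ Q).card + _ := card_union_le _ _
    _ ≤ (P.card + Q.card) + ∑ v ∈ R.filter (fun v => u ∈ N v), (B v).card :=
      add_le_add (card_union_le _ _) card_biUnion_le
    _ ≤ _ := by gcongr

lemma step {W₁ W₂ α : Type} [Fintype W₁]
    (N : W₂ → Finset W₁) (F : W₂ → Set (Finset α)) (f : W₁ → Finset α) (d : α)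
    (A : Finset α) (hfA : ∀ u, f u ⊆ A) (Fk : W₂ → Finset (Finset α))
    (hFk : ∀ v S, S ∈ F v → S.card = (N v).card → S ∈ Fk v)
    (hFk' : ∀ v, ∀ S ∈ Fk v, S.card = (N v).card)
    (b Δ : ℕ) (hΔ : 1 ≤ Δ) (β : ℝ) (hβ : 0 < β) (hβb : β * (5 / 4) ≤ 31 / 32 * b)
    (hb : ∀ u, b ≤ (f u).card) (hbW : 32 * Fintype.card W₁ ≤ b)
    (R : W₁ → Finset W₂) (hR : ∀ u v, u ∈ N v → v ∈ R u) (hRc : ∀ u, (R u).card ≤ Δ)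
    (hdens : ∀ v, ((N v).card.factorial * (Fk v).card : ℝ) ≤ β ^ (N v).card / (4 * Δ))
    (n : ℕ) : ∀ (U : Finset W₁) (u : W₁), U.card = n → u ∉ U →
      β * (good N F f d U).card ≤ (good N F f d (insert u U)).card := by
  induction n using Nat.strong_induction_on with
  | _ n ih =>
  intro U u hUn hu
  have iter : ∀ K P : Finset W₁, Disjoint P K → (P ∪ K).card ≤ n →
      β ^ K.card * (good N F f d P).card ≤ (good N F f d (P ∪ K)).card := by
    intro K
    induction K using Finset.induction_on with
    | empty => intro P _ _; simp
    | insert w K hw ihK =>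
      intro P hd hc
      rw [disjoint_insert_right] at hd
      have hw' : w ∉ P ∪ K := by simp [hd.1, hw]
      have he : P ∪ insert w K = insert w (P ∪ K) := by simp
      rw [he, card_insert_of_notMem hw'] at hc
      have h1 := ihK P hd.2 (by omega)
      have h2 := ih _ (by omega) (P ∪ K) w rfl hw'
      rw [he, card_insert_of_notMem hw, pow_succ']
      calc _ = β * (β ^ K.card * (good N F f d P).card) := by ring
        _ ≤ β * (good N F f d (P ∪ K)).card := by gcongr
        _ ≤ _ := h2
  have hstep := card_step N F f d U u hu (R u) (hR u)
  set g : ℝ := ((good N F f d U).card : ℝ) with hg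
  have hg0 : 0 ≤ g := by positivity
  have hΔ0 : (0 : ℝ) < Δ := by exact_mod_cast hΔ
  have hbad : ∀ v ∈ (R u).filter (fun v => u ∈ N v),
      (((good N F f d U ×ˢ f u).filter (fun p => N v ⊆ insert u U ∧
      Set.InjOn (Function.update p.1 u p.2) (insert u U : Finset W₁) ∧
      (N v).image (Function.update p.1 u p.2) ∈ F v)).card : ℝ) ≤ β * g / (4 * Δ) := by
    intro v hv
    have huv := (mem_filter.1 hv).2
    by_cases hN : N v ⊆ insert u U
    · have h1 := card_bad N F f d A hfA (Fk v) U u hu v huv (hFk v)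
      have h2 := card_tup (N v) A (Fk v) d (hFk' v)
      have hsub : (N v).erase u ⊆ U := fun w hw =>
        (mem_insert.1 (hN (mem_of_mem_erase hw))).resolve_left (ne_of_mem_erase hw)
      have hsd : U \ N v = U \ (N v).erase u := by
        ext w
        simp only [mem_sdiff, mem_erase, not_and]
        constructor
        · exact fun h => ⟨h.1, fun _ => h.2⟩
        · exact fun h => ⟨h.1, h.2 (fun h' => hu (h' ▸ h.1))⟩
      have hun : U \ (N v).erase u ∪ (N v).erase u = U := sdiff_union_of_subset hsub
      have h3 := iter ((N v).erase u) (U \ (N v).erase u) sdiff_disjoint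
        (by rw [hun]; omega)
      rw [hun, ← hsd] at h3
      have hk : (N v).card = ((N v).erase u).card + 1 := (card_erase_add_one huv).symm
      have h4 := hdens v
      set s : ℝ := ((good N F f d (U \ N v)).card : ℝ) with hs
      have hs0 : 0 ≤ s := by positivity
      calc _ ≤ s * ((tup (N v) A (Fk v) d).card : ℝ) := by rw [hs]; exact_mod_cast h1
        _ ≤ s * ((N v).card.factorial * (Fk v).card : ℝ) := by
          gcongr; exact_mod_cast h2
        _ ≤ s * (β ^ (N v).card / (4 * Δ)) := by gcongr
        _ = β * (β ^ ((N v).erase u).card * s) / (4 * Δ) := by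
          nth_rewrite 1 [hk]; rw [pow_succ]; ring
        _ ≤ β * g / (4 * Δ) := by gcongr
    · rw [filter_false_of_mem]
      · simp; positivity
      · intro p _ h; exact hN h.1
  have hsum := Finset.sum_le_card_nsmul _ _ _ hbad
  have hcard : (((R u).filter (fun v => u ∈ N v)).card : ℝ) ≤ Δ := by
    exact_mod_cast (card_filter_le _ _).trans (hRc u)
  have hsum' : ((R u).filter (fun v => u ∈ N v)).card • (β * g / (4 * Δ)) ≤ β * g / 4 := by
    rw [nsmul_eq_mul]
    calc _ ≤ (Δ : ℝ) * (β * g / (4 * Δ)) := by gcongr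
      _ = _ := by field_simp
  have hstepR : g * (f u).card ≤ (good N F f d (insert u U)).card + g * U.card +
      ∑ v ∈ (R u).filter (fun v => u ∈ N v),
      (((good N F f d U ×ˢ f u).filter (fun p => N v ⊆ insert u U ∧
      Set.InjOn (Function.update p.1 u p.2) (insert u U : Finset W₁) ∧
      (N v).image (Function.update p.1 u p.2) ∈ F v)).card : ℝ) := by
    rw [hg]; exact_mod_cast hstep
  have hU : 32 * (U.card : ℝ) ≤ b := by
    have : U.card ≤ Fintype.card W₁ := card_le_univ U
    exact_mod_cast (by omega : 32 * U.card ≤ b)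
  have hfb : (b : ℝ) ≤ (f u).card := by exact_mod_cast hb u
  have e1 : g * b ≤ g * (f u).card := by gcongr
  have e2 : g * U.card ≤ g * (b / 32) := by
    apply mul_le_mul_of_nonneg_left _ hg0; linarith
  have e3 : g * (β * (5 / 4)) ≤ g * (31 / 32 * b) := by gcongr
  linarith

lemma exists_good {W₁ W₂ α : Type} [Fintype W₁]
    (N : W₂ → Finset W₁) (F : W₂ → Set (Finset α)) (f : W₁ → Finset α) (d : α)
    (β : ℝ) (hβ : 0 < β) (h0 : ∀ v, N v = ∅ → ∅ ∉ F v)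
    (hstep : ∀ (U : Finset W₁) (u : W₁), u ∉ U →
      β * (good N F f d U).card ≤ (good N F f d (insert u U)).card) :
    ∃ φ : W₁ → α, Function.Injective φ ∧ (∀ u : W₁, φ u ∈ f u) ∧
      ∀ v : W₂, (N v).image φ ∉ F v := by
  have key : ∀ U : Finset W₁, 0 < ((good N F f d U).card : ℝ) := by
    intro U
    induction U using Finset.induction_on with
    | empty =>
      have : (fun _ => d) ∈ good N F f d ∅ := by
        refine mem_good.2 ⟨by simp, by simp, by simp, ?_⟩
        intro v hv
        have hv' := subset_empty.1 hv
        rw [hv']; simpa using h0 v hv'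
      exact_mod_cast card_pos.2 ⟨_, this⟩
    | insert u U hu ih => exact (mul_pos hβ ih).trans_le (hstep U u hu)
  have h := key univ
  obtain ⟨φ, hφ⟩ := card_pos.1 (by exact_mod_cast h : 0 < (good N F f d univ).card)
  obtain ⟨h1, -, h3, h4⟩ := mem_good.1 hφ
  refine ⟨φ, ?_, fun u => h1 u (mem_univ u), fun v => h4 v (subset_univ _)⟩
  intro x y hxy
  exact h3 (by simp) (by simp) hxy

end FwdStep

/-- (Embedding step via the local lemma.) -/
theorem forward_step {W₁ W₂ α : Type} [Fintype W₁] [Fintype W₂] [DecidableEq W₁]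
    [DecidableEq α]
    (Adj : W₁ → W₂ → Prop) [∀ u v, Decidable (Adj u v)]
    (Δp Δm : ℕ) (hΔp : 1 ≤ Δp) (hΔm : 1 ≤ Δm)
    (hdeg₁ : ∀ u : W₁, (rightNbhd Adj u).card ≤ Δp)
    (hdeg₂ : ∀ v : W₂, (leftNbhd Adj v).card ≤ Δm)
    (a b : ℕ) (hb : 0 < b) (hba : b ≤ a) (hbW : 32 * Fintype.card W₁ ≤ b)
    (A : Finset α) (hA : A.card = a)
    (F : W₂ → Set (Finset α)) (hFsub : ∀ v : W₂, ∀ S ∈ F v, S ⊆ A)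
    (hFdens : ∀ v : W₂,
      (Set.ncard {S ∈ F v | S.card = (leftNbhd Adj v).card} : ℝ) ≤
        1 / (4 * Δp * Δm) * ((2 : ℝ) ^ (-(1 : ℝ) / 2) * b / a) ^ (leftNbhd Adj v).card *
          (a.choose (leftNbhd Adj v).card : ℕ))
    (f : W₁ → Finset α) (hfsub : ∀ u : W₁, f u ⊆ A) (hfcard : ∀ u : W₁, b ≤ (f u).card) :
    ∃ φ : W₁ → α, Function.Injective φ ∧ (∀ u : W₁, φ u ∈ f u) ∧
      ∀ v : W₂, (leftNbhd Adj v).image φ ∉ F v := by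
  classical
  obtain ⟨d, -⟩ : A.Nonempty := by rw [← Finset.card_pos]; omega
  have hb0 : (0 : ℝ) < b := by exact_mod_cast hb
  have ha0 : (0 : ℝ) < a := by exact_mod_cast hb.trans_le hba
  have hp0 : (1 : ℝ) ≤ Δp := by exact_mod_cast hΔp
  have hm0 : (1 : ℝ) ≤ Δm := by exact_mod_cast hΔm
  set c : ℝ := (2 : ℝ) ^ (-(1 : ℝ) / 2) with hc
  have hc0 : 0 < c := by positivity
  have hc2 : c * c = 1 / 2 := by
    rw [hc, ← Real.rpow_add (by norm_num)]
    norm_num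
  have hc3 : c ≤ 31 / 40 := by nlinarith
  set Fk : W₂ → Finset (Finset α) := fun v =>
    (A.powersetCard (leftNbhd Adj v).card).filter (fun S => S ∈ F v) with hFk
  have hFkc : ∀ v, Set.ncard {S ∈ F v | S.card = (leftNbhd Adj v).card} = (Fk v).card := by
    intro v
    rw [← Set.ncard_coe_finset (Fk v)]
    apply congrArg Set.ncard
    ext S
    simp only [hFk, Set.mem_ofPred_eq, Finset.coe_filter, Finset.mem_powersetCard]
    constructor
    · exact fun h => ⟨⟨hFsub v S h.1, h.2⟩, h.1⟩
    · exact fun h => ⟨h.2, h.1.2⟩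
  have hdens : ∀ v, ((leftNbhd Adj v).card.factorial * (Fk v).card : ℝ) ≤
      (c * b) ^ (leftNbhd Adj v).card / (4 * Δp) := by
    intro v
    have h := hFdens v
    rw [hFkc v] at h
    set k := (leftNbhd Adj v).card with hk
    have hd : (k.factorial : ℝ) * (a.choose k : ℕ) ≤ (a : ℝ) ^ k := by
      rw [← Nat.cast_mul, ← Nat.descFactorial_eq_factorial_mul_choose]
      exact_mod_cast Nat.descFactorial_le_pow a k
    calc ((k.factorial : ℝ) * (Fk v).card : ℝ)
        ≤ k.factorial * (1 / (4 * Δp * Δm) * (c * b / a) ^ k * (a.choose k : ℕ)) := by gcongr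
      _ = 1 / (4 * Δp * Δm) * (c * b / a) ^ k * (k.factorial * (a.choose k : ℕ)) := by ring
      _ ≤ 1 / (4 * Δp * Δm) * (c * b / a) ^ k * (a : ℝ) ^ k := by gcongr
      _ = 1 / (4 * Δp * Δm) * (c * b) ^ k := by
        rw [mul_assoc, ← mul_pow, div_mul_cancel₀ _ ha0.ne']
      _ ≤ 1 / (4 * Δp) * (c * b) ^ k := by
        refine mul_le_mul_of_nonneg_right ?_ (by positivity)
        apply one_div_le_one_div_of_le (by positivity)
        nlinarith
      _ = _ := by ring
  have hmain := FwdStep.exists_good (leftNbhd Adj) F f d (c * b) (by positivity) ?_ ?_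
  · obtain ⟨φ, h1, h2, h3⟩ := hmain
    refine ⟨φ, h1, h2, fun v => ?_⟩
    convert h3 v
  · intro v hv hmem
    have h := hdens v
    have hone : 1 ≤ (Fk v).card := by
      apply Finset.card_pos.2
      exact ⟨∅, by simp [hFk, hv, hmem]⟩
    have hone' : (1 : ℝ) ≤ (Fk v).card := by exact_mod_cast hone
    rw [hv] at h
    simp only [Finset.card_empty, Nat.factorial_zero, Nat.cast_one, one_mul, pow_zero] at h
    have : 1 / (4 * (Δp : ℝ)) < 1 := by
      rw [div_lt_one (by positivity)]; linarith
    linarith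
  · intro U u hu
    have := FwdStep.step (leftNbhd Adj) F f d A hfsub Fk
      (fun v S hS hSc => by
        simp only [hFk, Finset.mem_filter, Finset.mem_powersetCard]
        exact ⟨⟨hFsub v S hS, hSc⟩, hS⟩)
      (fun v S hS => by
        simp only [hFk, Finset.mem_filter, Finset.mem_powersetCard] at hS
        exact hS.1.2)
      b Δp hΔp (c * b) (by positivity) (by nlinarith) hfcard hbW (rightNbhd Adj)
      (fun u v h => by simpa [leftNbhd, rightNbhd] using h) hdeg₁ hdens U.card U u rfl hu
    convert this
end

section
/- Let a, a', b, ℓ, s, N, k, Δ⁻ be positive integers with ℓ ≥ 2 and 2a' ≥ a, and let T be a tournament on N vertices with a median order v_1, …, v_N. Let o be an integer with 2ℓa' < o ≤ N − a + 1, and let B ⊆ [o, o + a) be a subset with |B| ≥ b. Then there exist an integer o' with o − 2ℓa' ≤ o' ≤ o − a' and a set A ⊆ [o', o' + a') such that: (1) |A| ≥ (a'/2)·((ℓ−1)/(2ℓ))^k, and (2) the number of Δ⁻-element subsets S ⊆ A with |N⁺(S) ∩ B| ≤ s is at most 4·((2ℓ)/(ℓ−1))^k·C(a', Δ⁻)·(s/b)^k.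 -/
lemma sum_biUnion_le_aux {V : Type} [DecidableEq V] (R : Finset ℕ) (J : ℕ → Finset V)
    (f : V → ℕ) : ∑ x ∈ R.biUnion J, f x ≤ ∑ m ∈ R, ∑ x ∈ J m, f x := by
  induction R using Finset.induction_on with
  | empty => simp
  | insert m R hm ih =>
    rw [Finset.biUnion_insert, Finset.sum_insert hm]
    have := Finset.sum_union_inter (s₁ := J m) (s₂ := R.biUnion J) (f := f)
    omega

open Finset in
lemma median_in {V : Type} {N : ℕ}
    (T : Digraph V) [DecidableRel T.Adj] (hT : T.IsTournament)
    (v : Fin N ≃ V) (hmed : IsMedianOrder T v) (i j : Fin N) (hij : i ≤ j) :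
    (j : ℕ) - i ≤ 2 * #{q : Fin N | i ≤ q ∧ q < j ∧ T.Adj (v q) (v j)} := by
  classical
  let f : Fin N → Fin N := fun x =>
    if x = j then i else if h : i ≤ x ∧ x < j then ⟨x + 1, by
      have := h.2; have := j.2; simp only [Fin.lt_def] at *; omega⟩ else x
  have hfv : ∀ x : Fin N, ((f x : Fin N) : ℕ) =
      if (x : ℕ) = j then (i : ℕ) else if (i : ℕ) ≤ x ∧ (x : ℕ) < j then (x : ℕ) + 1 else x := by
    intro x
    simp only [f, Fin.ext_iff, Fin.le_def, Fin.lt_def]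
    split_ifs <;> rfl
  have hij' : (i : ℕ) ≤ j := hij
  have hinj : Function.Injective f := by
    intro x y hxy
    have h1 := hfv x
    have h2 := hfv y
    rw [hxy] at h1
    apply Fin.ext
    split_ifs at h1 h2 <;> omega
  let c : Fin N ≃ Fin N := Equiv.ofBijective f (Finite.injective_iff_bijective.mp hinj)
  have hc : ∀ x, c x = f x := fun x => rfl
  have key := hmed (c.symm.trans v)
  let E : Finset (Fin N × Fin N) := {p | p.1 < p.2 ∧ T.Adj (v p.1) (v p.2)}
  let E' : Finset (Fin N × Fin N) := {p | c p.1 < c p.2 ∧ T.Adj (v p.1) (v p.2)}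
  let I : Finset (Fin N) := {q : Fin N | i ≤ q ∧ q < j ∧ T.Adj (v q) (v j)}
  let O : Finset (Fin N) := {q : Fin N | i ≤ q ∧ q < j ∧ T.Adj (v j) (v q)}
  have hE : forwardEdges T v = #E := by
    unfold forwardEdges
    rw [Nat.card_eq_fintype_card, ← Set.toFinset_card]
    congr 1
    ext p
    simp [E]
  have hE' : forwardEdges T (c.symm.trans v) = #E' := by
    unfold forwardEdges
    rw [Nat.card_eq_fintype_card, ← Set.toFinset_card]
    refine Finset.card_bij (fun p _ => (c.symm p.1, c.symm p.2)) ?_ ?_ ?_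
    · intro p hp
      rw [Set.mem_toFinset] at hp
      simpa [E'] using hp
    · intro p _ q _ h
      simpa [Prod.ext_iff] using h
    · intro p hp
      refine ⟨(c p.1, c p.2), ?_, by simp⟩
      rw [Set.mem_toFinset]
      simpa [E'] using hp
  rw [hE, hE'] at key
  let IP := I.image (fun q => (q, j))
  let OP := O.image (fun q => (j, q))
  have hIP : #IP ≤ #I := card_image_le
  have hOP : #OP = #O := card_image_of_injective _ (fun x y h => by simpa using h)
  have hdisj : Disjoint E OP := by
    rw [disjoint_left]
    rintro ⟨x, y⟩ h1 h2
    simp only [E, OP, O, mem_filter, mem_univ, true_and, mem_image, Prod.mk.injEq] at h1 h2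
    obtain ⟨q, ⟨_, h3, _⟩, h4, h5⟩ := h2
    subst h4 h5
    exact absurd h1.1 (not_lt.mpr h3.le)
  have hsub : E ∪ OP ⊆ E' ∪ IP := by
    rintro ⟨x, y⟩ h
    simp only [E, E', IP, I, OP, O, mem_union, mem_filter, mem_univ, true_and, mem_image,
      Prod.mk.injEq, hc] at h ⊢
    have h1 := hfv x
    have h2 := hfv y
    rcases h with ⟨h, hadj⟩ | ⟨q, ⟨h3, h4, h5⟩, rfl, rfl⟩
    · by_cases hy : y = j ∧ i ≤ x
      · right
        obtain ⟨rfl, hx⟩ := hy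
        exact ⟨x, ⟨hx, h, hadj⟩, rfl, rfl⟩
      · left
        refine ⟨?_, hadj⟩
        simp only [Fin.ext_iff, Fin.le_def, Fin.lt_def] at *
        split_ifs at h1 h2 <;> omega
    · left
      refine ⟨?_, h5⟩
      simp only [Fin.ext_iff, Fin.le_def, Fin.lt_def] at *
      split_ifs at h1 h2 <;> omega
  have h1 := card_le_card hsub
  rw [card_union_of_disjoint hdisj] at h1
  have h2 := card_union_le E' IP
  have h3 : Ico i j ⊆ I ∪ O := by
    intro q hq
    rw [mem_Ico] at hq
    simp only [I, O, mem_union, mem_filter, mem_univ, true_and]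
    have hne : v q ≠ v j := fun h => hq.2.ne (v.injective h)
    have := hT.2 _ _ hne
    tauto
  have h4 := card_le_card h3
  rw [Fin.card_Ico] at h4
  have h5 := card_union_le I O
  change _ ≤ 2 * #I
  omega

open Finset in
lemma density_step {V : Type} [DecidableEq V] {N : ℕ}
    (T : Digraph V) [DecidableRel T.Adj] (hT : T.IsTournament)
    (v : Fin N ≃ V) (hmed : IsMedianOrder T v)
    (a a' ℓ : ℕ) (ha' : 1 ≤ a') (hℓ : 2 ≤ ℓ) (haa' : a ≤ 2 * a')
    (o : ℕ) (ho1 : 2 * ℓ * a' < o)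
    (B : Finset V) (hBsub : B ⊆ ordInterval v o (o + a)) :
    ∃ o' : ℕ, o - 2 * ℓ * a' ≤ o' ∧ o' ≤ o - a' ∧
      (ℓ - 1) * a' * #B ≤ 2 * ℓ * ∑ x ∈ ordInterval v o' (o' + a'), #{y ∈ B | T.Adj x y} := by
  classical
  have hy : ∀ y ∈ B, (ℓ - 1) * a' ≤ #{x ∈ ordInterval v (o - 2 * ℓ * a') o | T.Adj x y} := by
    intro y hy
    have hy' := hBsub hy
    simp only [ordInterval, mem_image, mem_filter, mem_univ, true_and] at hy'
    obtain ⟨j, ⟨hj1, hj2⟩, rfl⟩ := hy'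
    have hjN := j.2
    let i : Fin N := ⟨o - 1 - 2 * ℓ * a', by omega⟩
    have hiv : (i : ℕ) = o - 1 - 2 * ℓ * a' := rfl
    have hm := median_in T hT v hmed i j (by rw [Fin.le_def]; omega)
    let X : Finset (Fin N) := {q | i ≤ q ∧ (q : ℕ) + 1 < o ∧ T.Adj (v q) (v j)}
    let Z : Finset (Fin N) := Ico ⟨o - 1, by omega⟩ j
    have h1 : ({q : Fin N | i ≤ q ∧ q < j ∧ T.Adj (v q) (v j)} : Finset _) ⊆ X ∪ Z := by
      intro q hq
      simp only [X, Z, mem_filter, mem_univ, true_and, mem_union, mem_Ico, Fin.le_def,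
        Fin.lt_def] at hq ⊢
      by_cases h : (q : ℕ) + 1 < o
      · exact Or.inl ⟨hq.1, h, hq.2.2⟩
      · exact Or.inr ⟨by omega, hq.2.1⟩
    have h2 := card_le_card h1
    have h3 := card_union_le X Z
    have hZ : #Z = j - (o - 1) := by simp [Z]
    have h4 : #X ≤ #{x ∈ ordInterval v (o - 2 * ℓ * a') o | T.Adj x (v j)} := by
      rw [← card_image_of_injective X v.injective]
      apply card_le_card
      intro x hx
      simp only [X, ordInterval, mem_image, mem_filter, mem_univ, true_and, Fin.le_def] at hx ⊢
      obtain ⟨q, ⟨h5, h6, h7⟩, rfl⟩ := hx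
      exact ⟨⟨q, ⟨by omega, h6⟩, rfl⟩, h7⟩
    refine le_trans ?_ h4
    have h5 : 2 * ((ℓ - 1) * a') + 2 * a' = 2 * ℓ * a' := by
      obtain ⟨m, rfl⟩ : ∃ m, ℓ = m + 1 := ⟨ℓ - 1, by omega⟩
      simp only [Nat.add_sub_cancel]; ring
    omega
  let st : ℕ → ℕ := fun m => o - 2 * ℓ * a' + m * a'
  let J : ℕ → Finset V := fun m => ordInterval v (st m) (st m + a')
  have hcover : ordInterval v (o - 2 * ℓ * a') o ⊆ (range (2 * ℓ)).biUnion J := by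
    intro x hx
    simp only [J, st, ordInterval, mem_image, mem_filter, mem_univ, true_and, mem_biUnion,
      mem_range] at hx ⊢
    obtain ⟨q, ⟨h1, h2⟩, rfl⟩ := hx
    set r := (q : ℕ) + 1 - (o - 2 * ℓ * a') with hr
    have h3 : r < 2 * ℓ * a' := by omega
    refine ⟨r / a', (Nat.div_lt_iff_lt_mul (by omega)).mpr h3, q, ?_, rfl⟩
    have h4 := Nat.div_add_mod r a'
    have h5 := Nat.mod_lt r (show a' > 0 by omega)
    rw [mul_comm] at h4
    omega
  have htot : (ℓ - 1) * a' * #B ≤ ∑ m ∈ range (2 * ℓ), ∑ x ∈ J m, #{y ∈ B | T.Adj x y} := by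
    calc (ℓ - 1) * a' * #B = ∑ y ∈ B, (ℓ - 1) * a' := by simp [mul_comm]
      _ ≤ ∑ y ∈ B, #{x ∈ ordInterval v (o - 2 * ℓ * a') o | T.Adj x y} := sum_le_sum hy
      _ = ∑ x ∈ ordInterval v (o - 2 * ℓ * a') o, #{y ∈ B | T.Adj x y} :=
        (sum_card_bipartiteAbove_eq_sum_card_bipartiteBelow _).symm
      _ ≤ ∑ x ∈ (range (2 * ℓ)).biUnion J, #{y ∈ B | T.Adj x y} :=
        sum_le_sum_of_subset hcover
      _ ≤ _ := sum_biUnion_le_aux _ _ _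
  obtain ⟨m, hm, hle⟩ := exists_le_of_sum_le (s := range (2 * ℓ))
    (f := fun _ => (ℓ - 1) * a' * #B)
    (g := fun m => 2 * ℓ * ∑ x ∈ J m, #{y ∈ B | T.Adj x y}) (by simp; omega) (by
      rw [sum_const, card_range, smul_eq_mul, ← mul_sum]
      exact Nat.mul_le_mul_left _ htot)
  refine ⟨st m, by simp [st], ?_, hle⟩
  rw [mem_range] at hm
  have : (m + 1) * a' ≤ 2 * ℓ * a' := Nat.mul_le_mul_right _ hm
  simp only [st]
  rw [add_mul] at this
  omega

open Finset in
lemma drc_step {V : Type} [Fintype V] [DecidableEq V]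
    (T : Digraph V) [DecidableRel T.Adj]
    (a' b s k Δm : ℕ) (r : ℝ) (hr : 0 < r)
    (ha' : 1 ≤ a') (hb : 1 ≤ b) (hs : 1 ≤ s) (hk : 1 ≤ k)
    (I B : Finset V) (hI : #I ≤ a') (hBcard : b ≤ #B)
    (hd : r * a' * #B ≤ ((∑ x ∈ I, #{y ∈ B | T.Adj x y} : ℕ) : ℝ)) :
    ∃ A ⊆ I, ((a' : ℝ) / 2) * r ^ k ≤ (#A : ℝ) ∧
        (#((A.powersetCard Δm).filter
            (fun S => (commonOutNbhd T S ∩ B).card ≤ s)) : ℝ) ≤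
          4 * (r⁻¹) ^ k * (a'.choose Δm : ℕ) * ((s : ℝ) / (b : ℝ)) ^ k := by
  classical
  let P : Finset (Fin k → V) := Fintype.piFinset (fun _ => B)
  have hP : #P = #B ^ k := by simp [P]
  let A : (Fin k → V) → Finset V := fun t => {x ∈ I | ∀ i, T.Adj x (t i)}
  have hAI : ∀ t, A t ⊆ I := fun t => filter_subset _ _
  let Y : (Fin k → V) → Finset (Finset V) := fun t =>
    ((A t).powersetCard Δm).filter (fun S => #(commonOutNbhd T S ∩ B) ≤ s)
  have hsumA : ∑ t ∈ P, #(A t) = ∑ x ∈ I, #{y ∈ B | T.Adj x y} ^ k := by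
    have := sum_card_bipartiteAbove_eq_sum_card_bipartiteBelow (s := P) (t := I)
      (fun t x => ∀ i, T.Adj x (t i))
    refine Eq.trans this (sum_congr rfl fun x _ => ?_)
    have : bipartiteBelow (fun (t : Fin k → V) x => ∀ i, T.Adj x (t i)) P x
        = Fintype.piFinset (fun _ : Fin k => {y ∈ B | T.Adj x y}) := by
      ext t
      simp [bipartiteBelow, P, forall_and]
    rw [this]
    simp
  have hsumY : ∑ t ∈ P, #(Y t) ≤ a'.choose Δm * s ^ k := by
    let Q : Finset (Finset V) := (I.powersetCard Δm).filter (fun S => #(commonOutNbhd T S ∩ B) ≤ s)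
    have hQ : #Q ≤ a'.choose Δm := by
      refine (card_filter_le _ _).trans ?_
      rw [card_powersetCard]
      exact Nat.choose_le_choose _ hI
    have h1 : ∀ t, Y t = bipartiteAbove (fun t S => S ⊆ A t) Q t := by
      intro t
      ext S
      simp only [Y, Q, bipartiteAbove, mem_filter, mem_powersetCard]
      constructor
      · rintro ⟨⟨h1, h2⟩, h3⟩
        exact ⟨⟨⟨h1.trans (hAI t), h2⟩, h3⟩, h1⟩
      · rintro ⟨⟨⟨_, h2⟩, h3⟩, h1⟩
        exact ⟨⟨h1, h2⟩, h3⟩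
    simp_rw [h1]
    rw [sum_card_bipartiteAbove_eq_sum_card_bipartiteBelow]
    calc _ ≤ ∑ S ∈ Q, s ^ k := by
          refine sum_le_sum fun S hS => ?_
          have h2 : bipartiteBelow (fun t S => S ⊆ A t) P S ⊆
              Fintype.piFinset (fun _ : Fin k => commonOutNbhd T S ∩ B) := by
            intro t ht
            simp only [bipartiteBelow, mem_filter, P, Fintype.mem_piFinset, mem_inter,
              commonOutNbhd, mem_univ, true_and] at ht ⊢
            intro i
            refine ⟨fun x hx => ?_, ht.1 i⟩
            have := ht.2 hx
            simp only [A, mem_filter] at this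
            exact this.2 i
          refine (card_le_card h2).trans ?_
          simp only [Fintype.card_piFinset, prod_const, card_univ, Fintype.card_fin]
          exact Nat.pow_le_pow_left (mem_filter.mp hS).2 k
      _ = #Q * s ^ k := by simp
      _ ≤ _ := Nat.mul_le_mul_right _ hQ
  have ha0 : (0 : ℝ) < a' := by exact_mod_cast ha'
  have hb0 : (0 : ℝ) < b := by exact_mod_cast hb
  have hs0 : (0 : ℝ) < s := by exact_mod_cast hs
  have hB0 : (0 : ℝ) < #B := by exact_mod_cast (lt_of_lt_of_le hb hBcard)
  have hbB : (b : ℝ) ≤ #B := by exact_mod_cast hBcard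
  have hJ : (a' : ℝ) * r ^ k * (#B : ℝ) ^ k ≤ ∑ t ∈ P, (#(A t) : ℝ) := by
    have e : ∑ t ∈ P, (#(A t) : ℝ) = ∑ x ∈ I, (#{y ∈ B | T.Adj x y} : ℝ) ^ k := by
      exact_mod_cast hsumA
    rw [e]
    obtain ⟨m, rfl⟩ : ∃ m, k = m + 1 := ⟨k - 1, by omega⟩
    push_cast at hd
    have h1 := pow_sum_le_card_mul_sum_pow (s := I) (f := fun x => (#{y ∈ B | T.Adj x y} : ℝ))
      (fun _ _ => by positivity) m
    have h2 : (r * a' * #B) ^ (m + 1) ≤ (∑ x ∈ I, (#{y ∈ B | T.Adj x y} : ℝ)) ^ (m + 1) :=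
      pow_le_pow_left₀ (by positivity) hd _
    have h3 : (#I : ℝ) ^ m ≤ (a' : ℝ) ^ m :=
      pow_le_pow_left₀ (by positivity) (by exact_mod_cast hI) _
    have h4 : (#I : ℝ) ^ m * ∑ x ∈ I, (#{y ∈ B | T.Adj x y} : ℝ) ^ (m + 1) ≤
        (a' : ℝ) ^ m * ∑ x ∈ I, (#{y ∈ B | T.Adj x y} : ℝ) ^ (m + 1) :=
      mul_le_mul_of_nonneg_right h3 (sum_nonneg fun _ _ => by positivity)
    have h5 : (0 : ℝ) < (a' : ℝ) ^ m := by positivity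
    refine le_of_mul_le_mul_left ?_ h5
    calc (a' : ℝ) ^ m * (a' * r ^ (m + 1) * (#B : ℝ) ^ (m + 1)) = (r * a' * #B) ^ (m + 1) := by
          rw [mul_pow, mul_pow]; ring
      _ ≤ _ := h2.trans (h1.trans h4)
  by_contra! hcon
  have hbad : ∀ t, (a' : ℝ) / 2 * r ^ k ≤ (#(A t) : ℝ) →
      4 * (r⁻¹) ^ k * (a'.choose Δm : ℕ) * ((s : ℝ) / (b : ℝ)) ^ k < #(Y t) :=
    fun t => hcon (A t) (hAI t)
  set C : ℝ := ((a'.choose Δm : ℕ) : ℝ) with hC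
  have hC0 : 0 ≤ C := by positivity
  have hsumY' : ∑ t ∈ P, (#(Y t) : ℝ) ≤ C * (s : ℝ) ^ k := by
    rw [hC]; exact_mod_cast hsumY
  have hrk : 0 < r ^ k := by positivity
  have hBk : 0 < (#B : ℝ) ^ k := by positivity
  -- pointwise inequality, multiplied out
  have hpt : ∀ t ∈ P, (#(A t) : ℝ) * (4 * C * ((s : ℝ) / b) ^ k) ≤
      a' / 2 * r ^ k * (4 * C * ((s : ℝ) / b) ^ k) + a' * r ^ k * #(Y t) := by
    intro t _
    have hM : 0 ≤ 4 * C * ((s : ℝ) / b) ^ k := by positivity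
    rcases le_or_gt ((a' : ℝ) / 2 * r ^ k) (#(A t) : ℝ) with h | h
    · have h1 := hbad t h
      have h2 : (#(A t) : ℝ) ≤ a' := by exact_mod_cast (card_le_card (hAI t)).trans hI
      have h3 : 4 * C * ((s : ℝ) / b) ^ k ≤ r ^ k * #(Y t) := by
        have : 4 * C * ((s : ℝ) / b) ^ k = r ^ k * (4 * (r⁻¹) ^ k * C * ((s : ℝ) / b) ^ k) := by
          rw [inv_pow]; field_simp
        rw [this]
        exact mul_le_mul_of_nonneg_left h1.le hrk.le
      have h4 : (#(A t) : ℝ) * (4 * C * ((s : ℝ) / b) ^ k) ≤ a' * (r ^ k * #(Y t)) :=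
        mul_le_mul h2 h3 hM ha0.le
      have h5 : 0 ≤ a' / 2 * r ^ k * (4 * C * ((s : ℝ) / b) ^ k) := by positivity
      linarith
    · have h1 := mul_le_mul_of_nonneg_right h.le hM
      have h2 : 0 ≤ a' * r ^ k * (#(Y t) : ℝ) := by positivity
      linarith
  have hsum := sum_le_sum hpt
  rw [← sum_mul, sum_add_distrib, ← mul_sum (s := P) (f := fun t => (#(Y t) : ℝ)), sum_const, hP, nsmul_eq_mul] at hsum
  push_cast at hsum
  rcases hC0.eq_or_lt with h0 | hCpos
  · -- no subsets of size Δm at all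
    have hY0 : ∀ t ∈ P, (#(Y t) : ℝ) = 0 := by
      have hle : ∑ t ∈ P, (#(Y t) : ℝ) ≤ 0 := by
        refine hsumY'.trans ?_
        rw [← h0]; simp
      have heq : ∑ t ∈ P, (#(Y t) : ℝ) = 0 :=
        le_antisymm hle (sum_nonneg fun _ _ => by positivity)
      exact (sum_eq_zero_iff_of_nonneg fun _ _ => by positivity).mp heq
    have hlt : ∑ t ∈ P, (#(A t) : ℝ) ≤ ∑ t ∈ P, ((a' : ℝ) / 2 * r ^ k) := by
      refine sum_le_sum fun t ht => ?_
      by_contra! h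
      have h1 := hbad t h.le
      rw [hY0 t ht, ← h0] at h1
      simp at h1
    rw [sum_const, hP, nsmul_eq_mul] at hlt
    push_cast at hlt
    have : 0 < (a' : ℝ) * r ^ k * (#B : ℝ) ^ k := by positivity
    nlinarith
  · set M := C * ((s : ℝ) / b) ^ k with hMdef
    have hM : 0 < M := by positivity
    have h1 : C * (s : ℝ) ^ k ≤ M * (#B : ℝ) ^ k := by
      have h2 : C * (s : ℝ) ^ k = M * (b : ℝ) ^ k := by
        rw [hMdef, div_pow]; field_simp
      rw [h2]
      exact mul_le_mul_of_nonneg_left (pow_le_pow_left₀ hb0.le hbB k) hM.le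
    have h2 : 4 * C * ((s : ℝ) / b) ^ k = 4 * M := by rw [hMdef]; ring
    rw [h2] at hsum
    have h3 := mul_le_mul_of_nonneg_right hJ (show 0 ≤ 4 * M by positivity)
    have h4 := mul_le_mul_of_nonneg_left (hsumY'.trans h1) (show 0 ≤ (a' : ℝ) * r ^ k by positivity)
    have h5 : 0 < (a' : ℝ) * r ^ k * (#B : ℝ) ^ k * M := by positivity
    nlinarith

lemma card_ordInterval_le {V : Type} [DecidableEq V] {N : ℕ} (v : Fin N ≃ V) (o c : ℕ) :
    (ordInterval v o (o + c)).card ≤ c := by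
  unfold ordInterval
  refine Finset.card_image_le.trans ?_
  have : c = (Finset.Ico o (o + c)).card := by simp
  rw [this]
  refine Finset.card_le_card_of_injOn (fun p : Fin N => (p : ℕ) + 1) ?_ ?_
  · intro p hp
    simpa using hp
  · intro p _ q _ h
    apply Fin.ext
    simpa using h

/-- (Backward step for graded digraphs.) -/
theorem graded_backward_step {V : Type} [Fintype V] [DecidableEq V] {N : ℕ}
    (T : Digraph V) [DecidableRel T.Adj] (hT : T.IsTournament)
    (v : Fin N ≃ V) (hmed : IsMedianOrder T v)
    (a a' b ℓ s k Δm : ℕ)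
    (ha : 1 ≤ a) (ha' : 1 ≤ a') (hb : 1 ≤ b) (hℓ : 2 ≤ ℓ) (hs : 1 ≤ s)
    (hk : 1 ≤ k) (hΔm : 1 ≤ Δm) (haa' : a ≤ 2 * a')
    (o : ℕ) (ho1 : 2 * ℓ * a' < o) (ho2 : o ≤ N - a + 1)
    (B : Finset V) (hBsub : B ⊆ ordInterval v o (o + a)) (hBcard : b ≤ B.card) :
    ∃ o' : ℕ, o - 2 * ℓ * a' ≤ o' ∧ o' ≤ o - a' ∧
      ∃ A : Finset V, A ⊆ ordInterval v o' (o' + a') ∧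
        ((a' : ℝ) / 2) * (((ℓ : ℝ) - 1) / (2 * (ℓ : ℝ))) ^ k ≤ (A.card : ℝ) ∧
        (((A.powersetCard Δm).filter
            (fun S => (commonOutNbhd T S ∩ B).card ≤ s)).card : ℝ) ≤
          4 * ((2 * (ℓ : ℝ)) / ((ℓ : ℝ) - 1)) ^ k * (a'.choose Δm : ℕ) *
            ((s : ℝ) / (b : ℝ)) ^ k := by
  obtain ⟨o', h1, h2, h3⟩ := density_step T hT v hmed a a' ℓ ha' hℓ haa' o ho1 B hBsub
  have hl : (2 : ℝ) ≤ ℓ := by exact_mod_cast hℓ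
  have hr : (0 : ℝ) < ((ℓ : ℝ) - 1) / (2 * (ℓ : ℝ)) := div_pos (by linarith) (by linarith)
  obtain ⟨A, hA, h4, h5⟩ := drc_step T a' b s k Δm (((ℓ : ℝ) - 1) / (2 * (ℓ : ℝ))) hr ha' hb hs hk
    (ordInterval v o' (o' + a')) B (card_ordInterval_le v o' a') hBcard (by
      have h6 : ((((ℓ - 1) * a' * B.card : ℕ)) : ℝ) ≤ ((2 * ℓ * ∑ x ∈ ordInterval v o' (o' + a'),
        (B.filter (fun y => T.Adj x y)).card : ℕ) : ℝ) := by exact_mod_cast h3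
      rw [Nat.cast_mul, Nat.cast_mul, Nat.cast_mul, Nat.cast_sub (by omega), Nat.cast_mul] at h6
      have e : ((ℓ : ℝ) - 1) / (2 * (ℓ : ℝ)) * a' * B.card
          = (((ℓ : ℝ) - 1) * a' * B.card) / (2 * ℓ) := by ring
      rw [e, div_le_iff₀ (by linarith), mul_comm _ (2 * (ℓ : ℝ))]
      simpa using h6)
  refine ⟨o', h1, h2, A, hA, h4, ?_⟩
  rw [inv_div] at h5
  exact h5
end

section
/- Let k ≥ 2 be an integer and let x be a real number with x ≥ (10⁸·log k)/2, where log denotes the natural logarithm. Then there exists a tournament R with vertex set [k] = {1, …, k} such that for every pair of functions f, g : [k] → [0,1] satisfying f(i) + g(i) ≤ 1 for all i ∈ [k] and Σ_{i=1}^{k} (f(i) + g(i)) = 2x, one has Σ over edges (i, j) ∈ E(R) of f(i)·g(j) ≤ 0.51·x². -/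
open Classical

/-- top set with threshold -/
lemma top_set {k : ℕ} (w : Fin k → ℝ) (m : ℕ) :
    ∃ (S : Finset (Fin k)) (t : ℝ), S.card ≤ m ∧ 0 ≤ t ∧ (∀ i ∈ S, t ≤ w i) ∧
      (∀ i, i ∉ S → w i ≤ t) ∧ (t = 0 ∨ S.card = m) := by
  induction m with
  | zero =>
    refine ⟨∅, ∑ i, |w i|, by simp, Finset.sum_nonneg fun i _ => abs_nonneg _, by simp, ?_,
      Or.inr (by simp)⟩
    intro i _
    exact (le_abs_self _).trans
      (Finset.single_le_sum (f := fun i => |w i|) (fun i _ => abs_nonneg _) (Finset.mem_univ i))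
  | succ m ih =>
    obtain ⟨S, t, hc, ht, h1, h2, h3⟩ := ih
    by_cases hS : (Sᶜ).Nonempty
    · obtain ⟨i, hi, him⟩ := Finset.exists_max_image Sᶜ w hS
      have hi' : i ∉ S := by simpa using hi
      by_cases hw : w i ≤ 0
      · refine ⟨S, 0, by omega, le_rfl, fun j hj => ht.trans (h1 j hj), ?_, Or.inl rfl⟩
        intro j hj
        exact (him j (by simpa using hj)).trans hw
      · rcases h3 with h3 | h3
        · exact absurd (h3 ▸ h2 i hi') hw
        · refine ⟨insert i S, w i, ?_, by linarith, ?_, ?_, Or.inr ?_⟩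
          · rw [Finset.card_insert_of_notMem hi']; omega
          · intro j hj
            rcases Finset.mem_insert.1 hj with rfl | hj
            · exact le_rfl
            · exact (h2 i hi').trans (h1 j hj)
          · intro j hj
            apply him j
            simp only [Finset.mem_insert, not_or] at hj
            simpa using hj.2
          · rw [Finset.card_insert_of_notMem hi']; omega
    · refine ⟨S, 0, by omega, le_rfl, fun j hj => ht.trans (h1 j hj), ?_, Or.inl rfl⟩
      intro j hj
      exact absurd ⟨j, by simpa using hj⟩ hS

lemma round_set {k : ℕ} (w f : Fin k → ℝ) (m : ℕ) (h0 : ∀ i, 0 ≤ f i) (h1 : ∀ i, f i ≤ 1)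
    (hs : ∑ i, f i ≤ m) :
    ∃ S : Finset (Fin k), S.card ≤ m ∧ ∑ i, f i * w i ≤ ∑ i ∈ S, w i := by
  obtain ⟨S, t, hc, ht, ha, hb, hd⟩ := top_set w m
  refine ⟨S, hc, ?_⟩
  have e1 : ∑ i, f i * (w i - t) ≤ ∑ i, (if i ∈ S then (w i - t) else 0) := by
    apply Finset.sum_le_sum
    intro i _
    split_ifs with h
    · have := ha i h
      nlinarith [h0 i, h1 i]
    · have := hb i h
      nlinarith [h0 i, h1 i]
  rw [Finset.sum_ite_mem, Finset.univ_inter] at e1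
  simp only [mul_sub, Finset.sum_sub_distrib, ← Finset.sum_mul, Finset.sum_const,
    nsmul_eq_mul] at e1
  rcases hd with rfl | hd
  · linarith
  · rw [hd] at e1
    nlinarith

/-- sign of a coin -/
noncomputable def sg (b : Bool) : ℝ := if b then 1 else -1

noncomputable def upart {k : ℕ} (σ : Fin k × Fin k → Bool) (i j : Fin k) : ℝ :=
  if i < j then sg (σ (i, j)) else 0

noncomputable def cf {k : ℕ} (a b : Fin k → ℝ) (p : Fin k × Fin k) : ℝ :=
  if p.1 < p.2 then a p.1 * b p.2 - a p.2 * b p.1 else 0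

lemma sum_eps {k : ℕ} (σ : Fin k × Fin k → Bool) (a b : Fin k → ℝ) :
    ∑ i, ∑ j, a i * b j * (upart σ i j - upart σ j i) = ∑ p, cf a b p * sg (σ p) := by
  have h : ∑ i, ∑ j, a i * b j * upart σ j i = ∑ i, ∑ j, a j * b i * upart σ i j :=
    Finset.sum_comm
  simp only [mul_sub, Finset.sum_sub_distrib]
  rw [h, Fintype.sum_prod_type]
  simp only [← Finset.sum_sub_distrib]
  refine Finset.sum_congr rfl fun i _ => Finset.sum_congr rfl fun j _ => ?_
  unfold cf upart
  split_ifs <;> simp <;> ring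

noncomputable def ind {k : ℕ} (S : Finset (Fin k)) (i : Fin k) : ℝ := if i ∈ S then 1 else 0

lemma sum_ind {k : ℕ} (S : Finset (Fin k)) : ∑ i, ind S i = S.card := by
  simp [ind]

lemma sum_cf_sq {k : ℕ} (S T : Finset (Fin k)) :
    ∑ p, (cf (ind S) (ind T) p) ^ 2 ≤ 2 * S.card * T.card := by
  have h : ∀ p : Fin k × Fin k, (cf (ind S) (ind T) p) ^ 2 ≤
      ind S p.1 * ind T p.2 + ind T p.1 * ind S p.2 := by
    intro p
    unfold cf ind
    split_ifs <;> norm_num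
  refine (Finset.sum_le_sum fun p _ => h p).trans ?_
  rw [Finset.sum_add_distrib, Fintype.sum_prod_type, Fintype.sum_prod_type]
  simp only [← Finset.mul_sum, ← Finset.sum_mul, sum_ind]
  apply le_of_eq; ring

lemma mgf {α : Type*} [Fintype α] [DecidableEq α] (c : α → ℝ) (l : ℝ) :
    ∑ σ : α → Bool, Real.exp (l * ∑ p, c p * sg (σ p)) ≤
      2 ^ (Fintype.card α) * Real.exp (l ^ 2 * (∑ p, c p ^ 2) / 2) := by
  have e : ∀ σ : α → Bool, Real.exp (l * ∑ p, c p * sg (σ p)) =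
      ∏ p, Real.exp (l * (c p * sg (σ p))) := by
    intro σ
    rw [Finset.mul_sum, Real.exp_sum]
  simp only [e]
  have e2 := Finset.prod_univ_sum (fun _ : α => (Finset.univ : Finset Bool))
    (fun p b => Real.exp (l * (c p * sg b)))
  rw [Fintype.piFinset_univ] at e2
  rw [← e2]
  have e3 : (2 : ℝ) ^ (Fintype.card α) * Real.exp (l ^ 2 * (∑ p, c p ^ 2) / 2) =
      ∏ p : α, (2 * Real.exp ((l * c p) ^ 2 / 2)) := by
    rw [Finset.prod_mul_distrib, Finset.prod_const, Finset.card_univ, ← Real.exp_sum,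
      ← Finset.sum_div, Finset.mul_sum]
    simp only [mul_pow]
  rw [e3]
  apply Finset.prod_le_prod
  · intro p _; positivity
  · intro p _
    have := Real.cosh_le_exp_half_sq (l * c p)
    rw [Real.cosh_eq] at this
    simp [sg]
    linarith

lemma card_small (k m : ℕ) (hk : 2 ≤ k) :
    ((Finset.univ : Finset (Finset (Fin k))).filter (fun S => S.card ≤ m)).card ≤ k ^ (m + 1) := by
  have hsub : (Finset.univ : Finset (Finset (Fin k))).filter (fun S => S.card ≤ m) ⊆
      (Finset.range (m + 1)).biUnion (fun r => Finset.powersetCard r Finset.univ) := by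
    intro S hS
    simp at hS ⊢
    omega
  refine (Finset.card_le_card hsub).trans (Finset.card_biUnion_le.trans ?_)
  refine le_trans (Finset.sum_le_sum (g := fun r => k ^ r) fun r _ => ?_)
    (Nat.geomSum_lt hk (fun r hr => Finset.mem_range.1 hr)).le
  rw [Finset.card_powersetCard, Finset.card_univ, Fintype.card_fin]
  exact Nat.choose_le_pow k r

lemma exists_good (k : ℕ) (hk : 2 ≤ k) (m : ℕ) (B l : ℝ) (hl : 0 < l)
    (hB : 2 * (m + 1) * Real.log k + l ^ 2 * m ^ 2 < l * B) :
    ∃ σ : Fin k × Fin k → Bool, ∀ S T : Finset (Fin k), S.card ≤ m → T.card ≤ m →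
      ∑ p, cf (ind S) (ind T) p * sg (σ p) ≤ B := by
  by_contra hcon
  push Not at hcon
  set F := (Finset.univ : Finset (Finset (Fin k))).filter (fun S => S.card ≤ m) with hF
  set N := Fintype.card (Fin k × Fin k) with hN
  have low : ∀ σ : Fin k × Fin k → Bool, Real.exp (l * B) ≤
      ∑ q ∈ F ×ˢ F, Real.exp (l * ∑ p, cf (ind q.1) (ind q.2) p * sg (σ p)) := by
    intro σ
    obtain ⟨S, T, hS, hT, h⟩ := hcon σ
    refine le_trans ?_ (Finset.single_le_sum
      (f := fun q : Finset (Fin k) × Finset (Fin k) =>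
        Real.exp (l * ∑ p, cf (ind q.1) (ind q.2) p * sg (σ p)))
      (fun q _ => (Real.exp_pos _).le) (a := (S, T)) (by simp [hF, hS, hT]))
    apply Real.exp_le_exp.2
    exact mul_le_mul_of_nonneg_left h.le hl.le
  have low2 := Finset.sum_le_sum (s := Finset.univ) fun σ _ => low σ
  rw [Finset.sum_const, Finset.card_univ, nsmul_eq_mul, Finset.sum_comm] at low2
  have up : ∀ q ∈ F ×ˢ F, ∑ σ : Fin k × Fin k → Bool,
      Real.exp (l * ∑ p, cf (ind q.1) (ind q.2) p * sg (σ p)) ≤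
      2 ^ N * Real.exp (l ^ 2 * m ^ 2) := by
    intro q hq
    refine (mgf _ l).trans ?_
    simp only [hF, Finset.mem_product, Finset.mem_filter, Finset.mem_univ, true_and] at hq
    have h1 : (q.1.card : ℝ) ≤ m := by exact_mod_cast hq.1
    have h2 : (q.2.card : ℝ) ≤ m := by exact_mod_cast hq.2
    have h3 : (q.1.card : ℝ) * q.2.card ≤ m * m := by gcongr
    have h4 := sum_cf_sq q.1 q.2
    have h5 : ∑ p, (cf (ind q.1) (ind q.2) p) ^ 2 ≤ 2 * m ^ 2 := by nlinarith
    have h6 := mul_le_mul_of_nonneg_left h5 (sq_nonneg l)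
    gcongr
    linarith
  have up2 := low2.trans (Finset.sum_le_sum up)
  rw [Finset.sum_const, nsmul_eq_mul, Finset.card_product] at up2
  have hcard : (Fintype.card (Fin k × Fin k → Bool) : ℝ) = 2 ^ N := by simp [hN]
  rw [hcard] at up2
  have hFc : (F.card : ℝ) ≤ Real.exp ((m + 1) * Real.log k) := by
    have h := card_small k m hk
    have h' : (F.card : ℝ) ≤ (k : ℝ) ^ (m + 1) := by exact_mod_cast h
    refine h'.trans (le_of_eq ?_)
    have hk0 : (0 : ℝ) < k := by positivity
    rw [show ((m : ℝ) + 1) * Real.log k = ((m + 1 : ℕ) : ℝ) * Real.log k by push_cast; ring,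
      Real.exp_nat_mul, Real.exp_log hk0]
  have h2N : (0 : ℝ) < 2 ^ N := by positivity
  have hFF : (F.card : ℝ) * F.card ≤ Real.exp (2 * (m + 1) * Real.log k) := by
    rw [show 2 * ((m : ℝ) + 1) * Real.log k = (m + 1) * Real.log k + (m + 1) * Real.log k by ring,
      Real.exp_add]
    gcongr
  have h7 : Real.exp (l * B) ≤
      Real.exp (2 * (m + 1) * Real.log k) * Real.exp (l ^ 2 * m ^ 2) := by
    have : (2 : ℝ) ^ N * Real.exp (l * B) ≤
        2 ^ N * ((F.card * F.card) * Real.exp (l ^ 2 * m ^ 2)) := by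
      push_cast at up2
      linarith
    refine (le_of_mul_le_mul_left this h2N).trans ?_
    gcongr
  rw [← Real.exp_add, Real.exp_le_exp] at h7
  linarith

/-- For `k ≥ 2` and `x ≥ (10⁸ log k)/2`, there is a tournament `R` on
`[k]` such that for all weight functions `f, g : [k] → [0,1]` with `f + g ≤ 1` and
`Σᵢ (f i + g i) = 2x`, the weight `Σ_{(i,j) ∈ E(R)} f i · g j` is at most `0.51 x²`. -/
theorem random_tournament_host (k : ℕ) (hk : 2 ≤ k) (x : ℝ)
    (hx : 10 ^ 8 * Real.log k / 2 ≤ x) :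
    ∃ R : Digraph (Fin k), R.IsTournament ∧
      ∀ f g : Fin k → ℝ,
        (∀ i, 0 ≤ f i) → (∀ i, f i ≤ 1) → (∀ i, 0 ≤ g i) → (∀ i, g i ≤ 1) →
        (∀ i, f i + g i ≤ 1) →
        (∑ i, (f i + g i)) = 2 * x →
        (∑ i, ∑ j, if R.Adj i j then f i * g j else 0) ≤ 0.51 * x ^ 2 := by
  have hlog : Real.log 2 ≤ Real.log k := by
    apply Real.log_le_log (by norm_num)
    exact_mod_cast hk
  have hlog2 := Real.log_two_gt_d9
  have hx1 : 1 ≤ x := by linarith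
  obtain ⟨m, hm1, hm2⟩ : ∃ m : ℕ, 2 * x ≤ m ∧ (m : ℝ) < 2 * x + 1 :=
    ⟨⌈2 * x⌉₊, Nat.le_ceil _, Nat.ceil_lt_add_one (by linarith)⟩
  obtain ⟨σ, hσ⟩ := exists_good k hk m (0.02 * x ^ 2) (1 / 1000) (by norm_num) (by
    have h1 : Real.log k ≤ 2 * x / 10 ^ 8 := by linarith
    have h2 : 2 * ((m : ℝ) + 1) * Real.log k ≤ 2 * (4 * x) * (2 * x / 10 ^ 8) := by
      have : (m : ℝ) + 1 ≤ 4 * x := by linarith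
      gcongr
    have h3 : (m : ℝ) ^ 2 ≤ (3 * x) ^ 2 := by
      have : (m : ℝ) ≤ 3 * x := by linarith
      gcongr
    nlinarith)
  obtain ⟨R, hR⟩ : ∃ R : Digraph (Fin k), ∀ i j, R.Adj i j ↔
      ((i < j ∧ σ (i, j) = true) ∨ (j < i ∧ σ (j, i) = false)) :=
    ⟨⟨fun i j => (i < j ∧ σ (i, j) = true) ∨ (j < i ∧ σ (j, i) = false)⟩, fun _ _ => Iff.rfl⟩
  refine ⟨R, ⟨by intro v; simp [hR], ?_⟩, ?_⟩
  · intro u v huv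
    rcases lt_or_gt_of_ne huv with h | h
    · simp [hR, h, h.not_gt]
    · simp [hR, h, h.not_gt]
  intro f g hf0 hf1 hg0 hg1 _ hsum
  rw [Finset.sum_add_distrib] at hsum
  have hfs : 0 ≤ ∑ i, f i := Finset.sum_nonneg fun i _ => hf0 i
  have hgs : 0 ≤ ∑ i, g i := Finset.sum_nonneg fun i _ => hg0 i
  obtain ⟨S, hS, hS2⟩ := round_set (fun i => ∑ j, g j * (upart σ i j - upart σ j i)) f m hf0 hf1
    (by linarith)
  obtain ⟨T, hT, hT2⟩ := round_set (fun j => ∑ i ∈ S, (upart σ i j - upart σ j i)) g m hg0 hg1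
    (by linarith)
  have key : ∑ i, f i * ∑ j, g j * (upart σ i j - upart σ j i) ≤ 0.02 * x ^ 2 := by
    refine hS2.trans ?_
    rw [Finset.sum_comm]
    simp only [← Finset.mul_sum]
    refine hT2.trans (le_trans (le_of_eq ?_) (hσ S T hS hT))
    rw [← sum_eps, Finset.sum_comm]
    simp [ind, Finset.sum_ite_mem, ite_mul, mul_ite]
  have main : (∑ i, ∑ j, if R.Adj i j then f i * g j else 0) ≤
      ∑ i, ∑ j, (f i * g j / 2 + f i * (g j * (upart σ i j - upart σ j i)) / 2) := by
    refine Finset.sum_le_sum fun i _ => Finset.sum_le_sum fun j _ => ?_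
    have hp : 0 ≤ f i * g j := mul_nonneg (hf0 i) (hg0 j)
    rcases lt_trichotomy i j with h | h | h
    · cases hb : σ (i, j) <;> simp [hR, upart, sg, h, h.not_gt, hb] <;> linarith
    · subst h
      simp [hR]; linarith
    · cases hb : σ (j, i) <;> simp [hR, upart, sg, h, h.not_gt, hb] <;> linarith
  refine main.trans ?_
  simp only [Finset.sum_add_distrib, ← Finset.sum_div, ← Finset.mul_sum, ← Finset.sum_mul]
  have hgf : ∑ i, g i = 2 * x - ∑ i, f i := by linarith
  rw [hgf]
  nlinarith [sq_nonneg (∑ i, f i - x)]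
end

section
/- There exist constants c' > 1 and Δ₀ such that for all integers Δ ≥ Δ₀ and n ≥ Δ the following holds. There exist a bipartite digraph D₀ with vertex classes A and B with |A| = |B| ≤ n, maximum degree at most Δ, and all edges directed from A to B, together with a tournament R on at least (c')^Δ·n vertices, such that for all A' ⊆ A and B' ⊆ B: (1) if |A'|, |B'| ≥ 0.98·|A|, then R contains no copy of the induced subdigraph D₀[A' ∪ B']; and (2) if |A'|, |B'| ≥ 0.01·|A|, then D₀ has at least one edge directed from A' to B'. -/
/-- The degree of a vertex in the underlying undirected graph of a digraph. -/
noncomputable def Digraph.degree {V : Type*} (G : Digraph V) (v : V) : ℕ :=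
  Nat.card {u : V | G.Adj v u ∨ G.Adj u v}

open Classical in
lemma blb_chernoff {ι : Type*} [Fintype ι] (Y : Finset ι) (b : ι → Bool) (r : ℕ) :
    (((Finset.univ : Finset (ι → Bool)).filter
      (fun c => (Y.filter (fun y => c y = b y)).card ≤ r)).card : ℝ) * (1/4)^r
      ≤ 2 ^ (Fintype.card ι) * (5/8)^Y.card := by
  have h1 : ∑ c : ι → Bool, ∏ y, (if y ∈ Y ∧ c y = b y then (1/4:ℝ) else 1)
      = 2 ^ (Fintype.card ι) * (5/8)^Y.card := by
    have := Finset.prod_univ_sum (fun _ : ι => (Finset.univ : Finset Bool))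
      (fun y v => if y ∈ Y ∧ v = b y then (1/4:ℝ) else 1)
    rw [Fintype.piFinset_univ] at this
    rw [← this]
    have h2 : ∀ y : ι, (∑ v : Bool, if y ∈ Y ∧ v = b y then (1/4:ℝ) else 1)
        = 2 * (if y ∈ Y then 5/8 else 1) := by
      intro y
      by_cases hy : y ∈ Y <;> cases b y <;> simp [hy] <;> norm_num
    rw [Finset.prod_congr rfl (fun y _ => h2 y), Finset.prod_mul_distrib]
    simp [Finset.prod_ite_mem, div_pow]
  rw [← h1, ← nsmul_eq_mul]
  calc _ ≤ ∑ c ∈ ((Finset.univ : Finset (ι → Bool)).filter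
      (fun c => (Y.filter (fun y => c y = b y)).card ≤ r)),
        (∏ y, (if y ∈ Y ∧ c y = b y then (1/4:ℝ) else 1)) := by
        apply Finset.card_nsmul_le_sum
        intro c hc
        rw [Finset.mem_filter] at hc
        rw [Finset.prod_ite]
        simp only [Finset.prod_const, one_pow, mul_one]
        apply pow_le_pow_of_le_one (by norm_num) (by norm_num)
        convert hc.2 using 2
        ext y; simp
    _ ≤ _ := by
        apply Finset.sum_le_sum_of_subset_of_nonneg (Finset.filter_subset _ _)
        intros
        apply Finset.prod_nonneg
        intros
        split_ifs <;> norm_num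

def blbT {k : ℕ} (c : Fin k × Fin k → Bool) (i j : Fin k) : Prop :=
  i ≠ j ∧ c (min i j, max i j) = decide (i < j)

open Classical in
lemma blb_tourn (u : ℕ) (hu : 1 ≤ u) : ∃ T : Fin (2^u) → Fin (2^u) → Prop,
    (∀ i, ¬ T i i) ∧ (∀ i j, i ≠ j → (T i j ↔ ¬ T j i)) ∧
    ∀ I J : Finset (Fin (2^u)), Disjoint I J → I.card = 8*u → J.card = 8*u →
      ∃ j ∈ J, u < (I.filter (fun i => T j i)).card := by
  by_contra hcon
  push Not at hcon
  set k := 2^u with hk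
  let P := (Finset.powersetCard (8*u) (Finset.univ : Finset (Fin k)))
  let bad : Finset (Fin k) × Finset (Fin k) → Finset (Fin k × Fin k → Bool) := fun p =>
    if Disjoint p.1 p.2 then
    Finset.univ.filter (fun c => ∀ j ∈ p.2, (p.1.filter (fun i => blbT c j i)).card ≤ u)
    else ∅
  have hcov : (Finset.univ : Finset (Fin k × Fin k → Bool)) ⊆ (P ×ˢ P).biUnion bad := by
    intro c _
    obtain ⟨I, J, hd, hI, hJ, h⟩ := hcon (blbT c) (by intro i h; exact h.1 rfl) (by
      intro i j hij
      unfold blbT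
      rw [min_comm j i, max_comm j i]
      rcases lt_or_gt_of_ne hij with h | h
      · simp [h, hij, hij.symm, not_lt_of_gt h]
      · simp [h, hij, hij.symm, not_lt_of_gt h])
    rw [Finset.mem_biUnion]
    refine ⟨(I, J), ?_, ?_⟩
    · simp [P, Finset.mem_powersetCard, hI, hJ]
    · simp only [bad, hd, if_true, Finset.mem_filter, Finset.mem_univ, true_and]
      exact h
  have hbad : ∀ p ∈ P ×ˢ P, ((bad p).card : ℝ) ≤ 2 ^ (Fintype.card (Fin k × Fin k)) * (1/8)^(8*u*u) := by
    rintro ⟨I, J⟩ hp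
    simp only [P, Finset.mem_product, Finset.mem_powersetCard, Finset.subset_univ, true_and] at hp
    obtain ⟨hI, hJ⟩ := hp
    by_cases hd : Disjoint I J
    swap
    · simp only [bad, hd, if_false, Finset.card_empty, Nat.cast_zero]; positivity
    let e : Fin k × Fin k → Fin k × Fin k := fun x => (min x.1 x.2, max x.1 x.2)
    have he : Set.InjOn e (J ×ˢ I : Finset _) := by
      rintro ⟨j, i⟩ hx ⟨j', i'⟩ hx' hee
      simp only [Finset.coe_product, Set.mem_prod, Finset.mem_coe] at hx hx'
      simp only [e, Prod.mk.injEq] at hee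
      have n1 : j ≠ i' := fun h => Finset.disjoint_left.1 hd hx'.2 (h ▸ hx.1)
      have n2 : j' ≠ i := fun h => Finset.disjoint_left.1 hd hx.2 (h ▸ hx'.1)
      simp only [Prod.mk.injEq]
      simp only [Fin.ext_iff, ne_eq, Fin.coe_min, Fin.coe_max] at *
      omega
    let b : Fin k × Fin k → Bool := fun y => decide (y.1 ∈ J)
    have hch := blb_chernoff ((J ×ˢ I).image e) b (8*u*u)
    rw [Finset.card_image_of_injOn he, Finset.card_product, hI, hJ] at hch
    have hsub : bad (I, J) ⊆ (Finset.univ : Finset (Fin k × Fin k → Bool)).filter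
      (fun c => (((J ×ˢ I).image e).filter (fun y => c y = b y)).card ≤ 8*u*u) := by
      intro c hc
      simp only [bad, hd, if_true, Finset.mem_filter, Finset.mem_univ, true_and] at hc ⊢
      have : ((J ×ˢ I).image e).filter (fun y => c y = b y) ⊆
          (J.sigma (fun j => I.filter (fun i => blbT c j i))).image (fun x => e (x.1, x.2)) := by
        intro y hy
        simp only [Finset.mem_filter, Finset.mem_image, Finset.mem_product] at hy
        obtain ⟨⟨⟨j, i⟩, ⟨hj, hi⟩, rfl⟩, hy⟩ := hy
        simp only at hj hi
        have hne : j ≠ i := fun h => Finset.disjoint_left.1 hd hi (h ▸ hj)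
        have hiJ : i ∉ J := fun h => Finset.disjoint_left.1 hd hi h
        rw [Finset.mem_image]
        refine ⟨⟨j, i⟩, ?_, rfl⟩
        simp only [Finset.mem_sigma, Finset.mem_filter, hj, hi, true_and]
        refine ⟨hne, ?_⟩
        simp only [e, b] at hy
        rw [hy]
        rcases lt_or_gt_of_ne hne with h | h
        · simp [h, h.le, hj]
        · simp [not_lt_of_gt h, h.le, hiJ]
      refine (Finset.card_le_card this).trans (Finset.card_image_le.trans ?_)
      rw [Finset.card_sigma]
      refine (Finset.sum_le_card_nsmul _ _ u hc).trans ?_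
      rw [hJ, smul_eq_mul]
    have h3 : ((bad (I, J)).card : ℝ) * (1/4)^(8*u*u) ≤ 2 ^ (Fintype.card (Fin k × Fin k)) * (5/8)^(8*u*(8*u)) :=
      le_trans (mul_le_mul_of_nonneg_right (by refine Nat.cast_le.2 ((Finset.card_le_card hsub).trans (le_of_eq ?_)); congr!) (by positivity)) hch
    have h4 : ((5:ℝ)/8)^(8*u*(8*u)) ≤ (1/8)^(8*u*u) * (1/4)^(8*u*u) := by
      rw [← mul_pow, show 8*u*(8*u) = 8*(8*u*u) by ring, pow_mul]
      gcongr
      norm_num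
    have h5 : ((bad (I, J)).card : ℝ) * (1/4)^(8*u*u) ≤ (2 ^ (Fintype.card (Fin k × Fin k)) * (1/8)^(8*u*u)) * (1/4)^(8*u*u) := by
      rw [mul_assoc (2 ^ (Fintype.card (Fin k × Fin k)) : ℝ)]
      exact h3.trans (mul_le_mul_of_nonneg_left h4 (by positivity))
    exact le_of_mul_le_mul_right h5 (by positivity)
  have h6 := (Finset.card_le_card hcov).trans Finset.card_biUnion_le
  have h7 : ((Finset.univ : Finset (Fin k × Fin k → Bool)).card : ℝ) ≤ ∑ p ∈ P ×ˢ P, ((bad p).card : ℝ) := by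
    exact_mod_cast h6
  have h8 := h7.trans (Finset.sum_le_card_nsmul _ _ _ hbad)
  rw [Finset.card_univ, Fintype.card_fun, Fintype.card_bool, nsmul_eq_mul, Finset.card_product] at h8
  have hP : (P.card : ℝ) ≤ 2^(u*(8*u)) := by
    have : P.card ≤ k^(8*u) := by
      simp only [P, Finset.card_powersetCard, Finset.card_univ, Fintype.card_fin]
      exact Nat.choose_le_pow _ _
    have h' : k^(8*u) = 2^(u*(8*u)) := by rw [pow_mul 2 u, ← hk]
    exact_mod_cast this.trans h'.le
  have h9 : ((P.card * P.card : ℕ) : ℝ) * (2 ^ (Fintype.card (Fin k × Fin k)) * (1/8)^(8*u*u))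
     ≤ 2 ^ (Fintype.card (Fin k × Fin k)) * (1/2)^(8*u*u) := by
    push_cast
    calc _ ≤ ((2:ℝ)^(u*(8*u)) * 2^(u*(8*u))) * (2 ^ (Fintype.card (Fin k × Fin k)) * (1/8)^(8*u*u)) := by gcongr
      _ = 2 ^ (Fintype.card (Fin k × Fin k)) * (1/2)^(8*u*u) := by
        rw [show u*(8*u) = 8*u*u by ring, mul_left_comm, ← mul_pow, ← mul_pow]; norm_num
  push_cast at h8 h9
  have h10 := h8.trans h9
  have h11 : ((1:ℝ)/2)^(8*u*u) < 1 := pow_lt_one₀ (by norm_num) (by norm_num) (by positivity)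
  have h12 : (0:ℝ) < 2 ^ (Fintype.card (Fin k × Fin k)) := by positivity
  nlinarith
open Classical in
lemma blb_perm (m r : ℕ) (F : Fin m → Finset (Fin m)) (S : Finset (Fin m)) (q : ℕ)
    (hS : S.card = r) (hF : ∀ a ∈ S, (F a).card ≤ q) :
    ((Finset.univ : Finset (Equiv.Perm (Fin m))).filter (fun π => ∀ a ∈ S, π a ∈ F a)).card
      ≤ q ^ r * (m - r).factorial := by
  have := Finset.card_le_mul_card_image_of_maps_to
    (s := (Finset.univ : Finset (Equiv.Perm (Fin m))).filter (fun π => ∀ a ∈ S, π a ∈ F a))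
    (t := Fintype.piFinset (fun a : S => F a)) (f := fun π (a : S) => π (a : Fin m))
    (by
      intro π hπ
      have hπ := (Finset.mem_filter.1 (by exact_mod_cast hπ)).2
      refine Finset.mem_coe.2 (Fintype.mem_piFinset.2 ?_)
      exact fun a => hπ a a.2) ((m-r).factorial)
    (by
      intro f hf
      by_cases hne : ∃ π₀ : Equiv.Perm (Fin m), ∀ a : S, π₀ a = f a
      swap
      · rw [Finset.card_eq_zero.2]
        · exact Nat.zero_le _
        · rw [Finset.filter_eq_empty_iff]
          intro π _ h
          exact hne ⟨π, fun a => congrFun h a⟩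
      obtain ⟨π₀, hπ₀⟩ := hne
      have hc : Fintype.card {g : Equiv.Perm (Fin m) // ∀ a, ¬ (a ∉ S) → g a = a} = (m-r).factorial := by
        rw [← Fintype.card_congr (Equiv.Perm.subtypeEquivSubtypePerm (fun a => a ∉ S)), Fintype.card_perm]
        congr 1
        rw [Fintype.card_subtype_compl]; simp [hS]
      rw [← hc, Fintype.card_subtype]
      apply Finset.card_le_card_of_injOn (fun π => π₀⁻¹ * π)
      · intro π hπ
        simp only [Finset.coe_filter, Finset.mem_filter, Finset.mem_univ, true_and, Set.mem_ofPred_eq] at hπ ⊢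
        intro a ha
        push Not at ha
        have h1 := congrFun hπ.2 ⟨a, ha⟩
        have h2 := hπ₀ ⟨a, ha⟩
        simp only at h1 h2
        rw [Equiv.Perm.mul_apply, h1, ← h2]
        simp
      · intro a _ b _ h
        simpa using h)
  refine this.trans ?_
  rw [mul_comm]
  gcongr
  rw [Fintype.card_piFinset]
  calc _ ≤ ∏ a : S, q := Finset.prod_le_prod' (fun a _ => hF a a.2)
    _ = q ^ r := by simp [hS]

open Classical in
lemma blb_perm_real (m : ℕ) (hm : 0 < m) (F : Fin m → Finset (Fin m))
    (h : (m:ℝ)/100 ≤ ((Finset.univ.filter (fun a => (m:ℝ)/100 ≤ ((F a).card : ℝ))).card : ℝ)) :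
    (((Finset.univ : Finset (Equiv.Perm (Fin m))).filter (fun π => ∀ a, π a ∉ F a)).card : ℝ)
      ≤ (198/199)^(m/200) * (m.factorial : ℝ) := by
  set r := m/200 with hr
  have hr200 : (200:ℝ) * r ≤ m := by
    have : 200 * r ≤ m := by omega
    exact_mod_cast this
  have hm' : (0:ℝ) < m := by exact_mod_cast hm
  obtain ⟨S, hSs, hS⟩ := Finset.exists_subset_card_eq
    (s := Finset.univ.filter (fun a => (m:ℝ)/100 ≤ ((F a).card : ℝ))) (n := r) (by
      have : (r:ℝ) ≤ ((Finset.univ.filter (fun a => (m:ℝ)/100 ≤ ((F a).card : ℝ))).card : ℝ) := by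
        linarith
      exact_mod_cast this)
  let q := ⌊(99/100:ℝ) * m⌋₊
  have h1 := blb_perm m r (fun a => (F a)ᶜ) S q hS (by
    intro a ha
    have := (Finset.mem_filter.1 (hSs ha)).2
    apply Nat.le_floor
    rw [Finset.card_compl, Fintype.card_fin, Nat.cast_sub (by simpa using Finset.card_le_univ (F a))]
    linarith)
  have h2 : ((Finset.univ : Finset (Equiv.Perm (Fin m))).filter (fun π => ∀ a, π a ∉ F a)).card
      ≤ q ^ r * (m - r).factorial := by
    refine le_trans (Finset.card_le_card ?_) h1
    intro π hπ
    simp only [Finset.mem_filter, Finset.mem_univ, true_and, Finset.mem_compl] at hπ ⊢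
    exact fun a _ => hπ a
  have h3 : (((Finset.univ : Finset (Equiv.Perm (Fin m))).filter (fun π => ∀ a, π a ∉ F a)).card : ℝ)
      ≤ (q:ℝ) ^ r * ((m - r).factorial : ℝ) := by exact_mod_cast h2
  refine h3.trans ?_
  have hq : (q:ℝ) ≤ 99/100 * m := Nat.floor_le (by positivity)
  have h4 : ((199/200 : ℝ) * m)^r ≤ (m.descFactorial r : ℝ) := by
    have := Nat.pow_sub_le_descFactorial m r
    calc ((199/200 : ℝ) * m)^r ≤ ((m + 1 - r : ℕ) : ℝ)^r := by
          gcongr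
          rw [Nat.cast_sub (by omega)]
          push_cast
          linarith
      _ ≤ _ := by exact_mod_cast this
  have h5 : ((m-r).factorial : ℝ) * (m.descFactorial r : ℝ) = m.factorial := by
    exact_mod_cast Nat.factorial_mul_descFactorial (show r ≤ m by omega)
  rw [← h5]
  calc (q:ℝ) ^ r * ((m - r).factorial : ℝ) ≤ (99/100 * m)^r * ((m - r).factorial : ℝ) := by gcongr
    _ = (198/199)^r * (((m-r).factorial : ℝ) * (199/200*m)^r) := by
      rw [mul_left_comm, ← mul_pow, mul_comm]; congr 2; ring
    _ ≤ _ := by gcongr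

open Classical in
lemma blb_union {Ω : Type*} [Fintype Ω] (m D : ℕ) (hm : 0 < m) (F : Ω → Fin m → Finset (Fin m))
    (hΩ : (Fintype.card Ω : ℝ) * (198/199)^(m/200*D) < 1) :
    ∃ π : Fin D → Equiv.Perm (Fin m), ∀ w,
      (m:ℝ)/100 ≤ ((Finset.univ.filter (fun a => (m:ℝ)/100 ≤ ((F w a).card : ℝ))).card : ℝ) →
      ∃ l a, π l a ∈ F w a := by
  by_contra hcon
  push Not at hcon
  let G : Finset Ω := Finset.univ.filter (fun w =>
    (m:ℝ)/100 ≤ ((Finset.univ.filter (fun a => (m:ℝ)/100 ≤ ((F w a).card : ℝ))).card : ℝ))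
  let bad : Ω → Finset (Fin D → Equiv.Perm (Fin m)) := fun w =>
    Fintype.piFinset (fun _ => (Finset.univ : Finset (Equiv.Perm (Fin m))).filter (fun π => ∀ a, π a ∉ F w a))
  have hcov : (Finset.univ : Finset (Fin D → Equiv.Perm (Fin m))) ⊆ G.biUnion bad := by
    intro π _
    obtain ⟨w, hw, h⟩ := hcon π
    rw [Finset.mem_biUnion]
    refine ⟨w, by simpa [G] using hw, ?_⟩
    simpa [bad] using h
  have hb : ∀ w ∈ G, ((bad w).card : ℝ) ≤ (198/199)^(m/200*D) * (m.factorial : ℝ)^D := by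
    intro w hw
    have := blb_perm_real m hm (F w) (Finset.mem_filter.1 hw).2
    simp only [bad, Fintype.card_piFinset, Finset.prod_const, Finset.card_univ, Fintype.card_fin]
    push_cast
    rw [pow_mul, ← mul_pow]
    gcongr
  have h7 : ((Finset.univ : Finset (Fin D → Equiv.Perm (Fin m))).card : ℝ) ≤ ∑ p ∈ G, ((bad p).card : ℝ) := by
    exact_mod_cast (Finset.card_le_card hcov).trans Finset.card_biUnion_le
  have h8 := h7.trans (Finset.sum_le_card_nsmul _ _ _ hb)
  rw [Finset.card_univ, Fintype.card_fun, Fintype.card_perm, Fintype.card_fin, Fintype.card_fin, nsmul_eq_mul] at h8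
  have hG : (G.card : ℝ) ≤ Fintype.card Ω := by exact_mod_cast Finset.card_le_univ G
  have hp : (0:ℝ) < (m.factorial : ℝ)^D := by positivity
  have h9 : (G.card : ℝ) * ((198/199)^(m/200*D) * (m.factorial : ℝ)^D) ≤
     ((Fintype.card Ω : ℝ) * (198/199)^(m/200*D)) * (m.factorial : ℝ)^D := by
    rw [← mul_assoc]; gcongr
  push_cast at h8
  nlinarith
open Classical in
lemma blb_rows {k : ℕ} (u s m : ℕ) (hu : 1 ≤ u) (hs : 32*u*s ≤ m) (hm : 0 < m)
    (T : Fin k → Fin k → Prop)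
    (hT : ∀ I J : Finset (Fin k), Disjoint I J → I.card = 8*u → J.card = 8*u →
      ∃ j ∈ J, u < (I.filter (fun i => T j i)).card)
    (φ ψ : Fin m → Fin k) (A B : Finset (Fin m))
    (hφ : ∀ i, (A.filter (fun a => φ a = i)).card ≤ s)
    (hψ : ∀ i, (B.filter (fun a => ψ a = i)).card ≤ s)
    (hA : 0.98 * (m : ℝ) ≤ (A.card : ℝ)) (hB : 0.98 * (m : ℝ) ≤ (B.card : ℝ)) :
    (m:ℝ)/100 ≤ ((A.filter (fun a => (m:ℝ)/100 ≤
      ((B.filter (fun b => T (ψ b) (φ a))).card : ℝ))).card : ℝ) := by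
  have hs' : (32:ℝ)*u*s ≤ m := by exact_mod_cast hs
  have hm' : (0:ℝ) < m := by exact_mod_cast hm
  have hu' : (1:ℝ) ≤ u := by exact_mod_cast hu
  let Bad : Finset (Fin k) := Finset.univ.filter (fun i =>
    ((B.filter (fun b => T (ψ b) i)).card : ℝ) < (m:ℝ)/100)
  have hBad : Bad.card ≤ 8*u := by
    by_contra hlt
    push Not at hlt
    obtain ⟨I, hIs, hI⟩ := Finset.exists_subset_card_eq hlt.le
    -- vertices of B with many out-neighbours in I
    let B1 := B.filter (fun b => u < (I.filter (fun i => T (ψ b) i)).card)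
    let B2 := B.filter (fun b => ¬ u < (I.filter (fun i => T (ψ b) i)).card)
    have h12 : B1.card + B2.card = B.card := Finset.card_filter_add_card_filter_not _
    have hdc : ∑ b ∈ B, (I.filter (fun i => T (ψ b) i)).card
        = ∑ i ∈ I, (B.filter (fun b => T (ψ b) i)).card :=
      Finset.sum_card_bipartiteAbove_eq_sum_card_bipartiteBelow (fun b i => T (ψ b) i)
    have hup : ((∑ i ∈ I, (B.filter (fun b => T (ψ b) i)).card : ℕ) : ℝ) ≤ (8*u:ℝ) * (m/100) := by
      push_cast
      refine (Finset.sum_le_card_nsmul _ _ ((m:ℝ)/100) ?_).trans ?_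
      · intro i hi
        exact (Finset.mem_filter.1 (hIs hi)).2.le
      · rw [hI, nsmul_eq_mul]; push_cast; rfl
    have hlow : B1.card * u ≤ ∑ b ∈ B, (I.filter (fun i => T (ψ b) i)).card := by
      refine le_trans ?_ (Finset.sum_le_sum_of_subset (Finset.filter_subset _ _ : B1 ⊆ B))
      rw [← smul_eq_mul]
      apply Finset.card_nsmul_le_sum
      intro b hb
      exact (Finset.mem_filter.1 hb).2.le
    rw [hdc] at hlow
    have hlow' : (B1.card : ℝ) * u ≤ (8*u:ℝ) * (m/100) := by
      refine le_trans ?_ hup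
      exact_mod_cast hlow
    have hB1 : (B1.card : ℝ) ≤ 8 * (m/100) := by
      have : (B1.card : ℝ) * u ≤ (8 * (m/100)) * u := by linarith
      exact le_of_mul_le_mul_right this (by linarith)
    have h12' : (B1.card : ℝ) + B2.card = B.card := by exact_mod_cast h12
    have himg : B2.card ≤ s * (B2.image ψ).card := by
      apply Finset.card_le_mul_card_image
      intro i _
      refine le_trans (Finset.card_le_card ?_) (hψ i)
      exact Finset.filter_subset_filter _ (Finset.filter_subset _ _)
    have hJ0 : 16*u ≤ (B2.image ψ).card := by
      by_contra hc
      push Not at hc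
      have h1 : B2.card ≤ s * (16*u) := himg.trans (Nat.mul_le_mul_left _ hc.le)
      have h2 : (B2.card:ℝ) ≤ s * (16*u) := by exact_mod_cast h1
      norm_num at hB
      nlinarith
    have hJ1 : 8*u ≤ (B2.image ψ \ I).card := by
      have := Finset.le_card_sdiff I (B2.image ψ)
      omega
    obtain ⟨J, hJs, hJ⟩ := Finset.exists_subset_card_eq hJ1
    obtain ⟨j, hj, hju⟩ := hT I J
      (Finset.disjoint_left.2 (fun x hx hxJ => (Finset.mem_sdiff.1 (hJs hxJ)).2 hx)) hI hJ
    obtain ⟨b, hb, rfl⟩ := Finset.mem_image.1 (Finset.mem_sdiff.1 (hJs hj)).1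
    exact (Finset.mem_filter.1 hb).2 hju
  let A1 := A.filter (fun a => (m:ℝ)/100 ≤ ((B.filter (fun b => T (ψ b) (φ a))).card : ℝ))
  let A2 := A.filter (fun a => ¬ (m:ℝ)/100 ≤ ((B.filter (fun b => T (ψ b) (φ a))).card : ℝ))
  have h12 : A1.card + A2.card = A.card := Finset.card_filter_add_card_filter_not _
  have hA2 : A2.card ≤ s * Bad.card := by
    apply Finset.card_le_mul_card_image_of_maps_to (f := φ)
    · intro a ha
      have := (Finset.mem_filter.1 ha).2
      exact Finset.mem_coe.2 (Finset.mem_filter.2 ⟨Finset.mem_univ _, not_le.1 this⟩)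
    · intro i _
      refine le_trans (Finset.card_le_card ?_) (hφ i)
      exact Finset.filter_subset_filter _ (Finset.filter_subset _ _)
  have h1 : A2.card ≤ s * (8*u) := hA2.trans (Nat.mul_le_mul_left _ hBad)
  have h2 : (A2.card:ℝ) ≤ s * (8*u) := by exact_mod_cast h1
  have h12' : (A1.card : ℝ) + A2.card = A.card := by exact_mod_cast h12
  change (m:ℝ)/100 ≤ (A1.card : ℝ)
  norm_num at hA
  nlinarith

lemma blb_num (u : ℕ) (hu : 40 ≤ u) : (64:ℝ) * u * (6/5)^u ≤ 2^u := by
  have h : (64:ℝ) * u ≤ (5/3)^u := by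
    induction u, hu using Nat.le_induction with
    | base => norm_num
    | succ v hv ih =>
      have : (40:ℝ) ≤ v := by exact_mod_cast hv
      rw [pow_succ]; push_cast
      linarith
  calc (64:ℝ) * u * (6/5)^u ≤ (5/3)^u * (6/5)^u := by gcongr
    _ = 2^u := by rw [← mul_pow]; norm_num

lemma blb_omega (m u D : ℕ) (hm : 200 ≤ m) (hu : 1 ≤ u) (hD : 640000 * u ≤ D) :
    ((((2^u)^m * ((2^u)^m * (2^m * (2^m * 2))) : ℕ)) : ℝ) * (198/199)^(m/200*D) < 1 := by
  have h1 : 200*(8*m*u) ≤ m/200*D := by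
    have h2 : m ≤ 400*(m/200) := by omega
    calc 200*(8*m*u) = m * (1600*u) := by ring
      _ ≤ (400*(m/200))*(1600*u) := Nat.mul_le_mul_right _ h2
      _ = m/200*(640000*u) := by ring
      _ ≤ _ := Nat.mul_le_mul_left _ hD
  have h3 : ((198:ℝ)/199)^(m/200*D) ≤ (1/2)^(8*m*u) := by
    calc ((198:ℝ)/199)^(m/200*D) ≤ (198/199)^(200*(8*m*u)) :=
          pow_le_pow_of_le_one (by norm_num) (by norm_num) h1
      _ = ((198/199)^200)^(8*m*u) := pow_mul _ _ _
      _ ≤ _ := by gcongr; norm_num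
  have h4 : (2^u)^m * ((2^u)^m * (2^m * (2^m * 2))) = 2^(2*u*m+2*m+1) := by
    rw [← pow_mul]; ring
  rw [h4]
  have h5 : 2*u*m+2*m+1 < 8*m*u := by nlinarith
  push_cast
  calc (2:ℝ)^(2*u*m+2*m+1) * (198/199)^(m/200*D) ≤ 2^(2*u*m+2*m+1) * (1/2)^(8*m*u) := by gcongr
    _ < 2^(8*m*u) * (1/2)^(8*m*u) := by
      gcongr
      norm_num
    _ = 1 := by rw [← mul_pow]; norm_num

/-- (The bipartite lower-bound construction.)  There are `c' > 1` and
`Δ₀` such that for all `Δ ≥ Δ₀` and `n ≥ Δ` there exist a bipartite digraph `D₀` with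
vertex classes `A = Fin m` (embedded via `Sum.inl`) and `B = Fin m` (embedded via
`Sum.inr`), where `m = |A| = |B| ≤ n`, having maximum degree at most `Δ` and all edges
directed from `A` to `B`, and a tournament `R` on at least `(c')^Δ · n` vertices, such
that for all `A' ⊆ A` and `B' ⊆ B`:
(1) if `|A'|, |B'| ≥ 0.98 |A|` then `R` contains no copy of `D₀[A' ∪ B']`, and
(2) if `|A'|, |B'| ≥ 0.01 |A|` then `D₀` has an edge from `A'` to `B'`. -/
theorem bipartite_lower_bound :
    ∃ c' : ℝ, 1 < c' ∧ ∃ Δ₀ : ℕ, ∀ Δ : ℕ, Δ₀ ≤ Δ → ∀ n : ℕ, Δ ≤ n →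
      ∃ (m : ℕ) (D₀ : Digraph (Fin m ⊕ Fin m)) (M : ℕ) (R : Digraph (Fin M)),
        m ≤ n ∧
        (∀ u v : Fin m ⊕ Fin m, D₀.Adj u v →
          (∃ x : Fin m, u = Sum.inl x) ∧ (∃ y : Fin m, v = Sum.inr y)) ∧
        (∀ v : Fin m ⊕ Fin m, D₀.degree v ≤ Δ) ∧
        c' ^ Δ * (n : ℝ) ≤ (M : ℝ) ∧
        R.IsTournament ∧
        (∀ A' B' : Finset (Fin m),
          (0.98 * (m : ℝ) ≤ (A'.card : ℝ) → 0.98 * (m : ℝ) ≤ (B'.card : ℝ) →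
            ¬ ∃ φ : (Fin m ⊕ Fin m) → Fin M,
                Set.InjOn φ ((Sum.inl '' (A' : Set (Fin m))) ∪
                  (Sum.inr '' (B' : Set (Fin m)))) ∧
                ∀ u ∈ ((Sum.inl '' (A' : Set (Fin m))) ∪
                    (Sum.inr '' (B' : Set (Fin m)))),
                  ∀ v ∈ ((Sum.inl '' (A' : Set (Fin m))) ∪
                    (Sum.inr '' (B' : Set (Fin m)))),
                    D₀.Adj u v → R.Adj (φ u) (φ v)) ∧
          (0.01 * (m : ℝ) ≤ (A'.card : ℝ) → 0.01 * (m : ℝ) ≤ (B'.card : ℝ) →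
            ∃ a ∈ A', ∃ b ∈ B', D₀.Adj (Sum.inl a) (Sum.inr b))) := by
  classical
  set N : ℕ := 640000 with hN
  refine ⟨(6/5:ℝ) ^ (((2*N : ℕ) : ℝ)⁻¹), Real.one_lt_rpow (by norm_num) (by positivity), 40*N, ?_⟩
  set c : ℝ := (6/5:ℝ) ^ (((2*N : ℕ) : ℝ)⁻¹) with hc
  have hc1 : 1 < c := Real.one_lt_rpow (by norm_num) (by positivity)
  have hcN : c^(2*N) = 6/5 := Real.rpow_inv_natCast_pow (by norm_num) (by norm_num [hN])
  clear_value c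
  intro D hD n hn
  obtain ⟨u, hu⟩ : ∃ u, u = D / N := ⟨_, rfl⟩
  have hu40 : 40 ≤ u := by rw [hu, hN]; omega
  have huD : 640000*u ≤ D := by rw [hu, hN]; omega
  have hDu : D ≤ 2*N*u := by rw [hN] at hu ⊢; omega
  obtain ⟨T, hT1, hT2, hT3⟩ := blb_tourn u (by omega)
  obtain ⟨s, hs⟩ : ∃ s, s = n / (32*u) := ⟨_, rfl⟩
  have hsn : 32*u*s ≤ n := by rw [hs]; exact Nat.mul_div_le _ _
  have hsn2 : n ≤ 64*u*s := by
    have h1 : n < 32*u*(s+1) := by rw [hs]; exact Nat.lt_mul_div_succ _ (by omega)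
    have h2 : 1 ≤ s := by rw [hs, Nat.le_div_iff_mul_le (by omega)]; omega
    nlinarith
  have hn0 : 0 < n := by omega
  let F : ((Fin n → Fin (2^u)) × (Fin n → Fin (2^u)) × Finset (Fin n) × Finset (Fin n) × Bool)
      → Fin n → Finset (Fin n) := fun w a =>
    if a ∈ w.2.2.1 then w.2.2.2.1.filter (fun b => w.2.2.2.2 = true ∨ T (w.2.1 b) (w.1 a)) else ∅
  obtain ⟨π, hπ⟩ := blb_union n D hn0 F (by
    have := blb_omega n u D (by omega) (by omega) huD
    simpa using this)
  let e : Fin (2^u) × Fin s ≃ Fin (2^u*s) := finProdFinEquiv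
  refine ⟨n, ⟨fun x y => ∃ a l, x = Sum.inl a ∧ y = Sum.inr (π l a)⟩, 2^u*s,
    ⟨fun x y => T (e.symm x).1 (e.symm y).1 ∨
      ((e.symm x).1 = (e.symm y).1 ∧ (e.symm x).2 < (e.symm y).2)⟩, le_rfl, ?_, ?_, ?_, ?_, ?_⟩
  · rintro x y ⟨a, l, rfl, rfl⟩
    exact ⟨⟨a, rfl⟩, ⟨_, rfl⟩⟩
  · have key : ∀ (X : Set (Fin n ⊕ Fin n)) (f : Fin D → Fin n ⊕ Fin n), X ⊆ Set.range f →
        Nat.card X ≤ D := by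
      intro X f hX
      calc Nat.card X ≤ Nat.card (Set.range f) := Nat.card_mono (Set.toFinite _) hX
        _ ≤ Nat.card (Fin D) := Finite.card_range_le f
        _ = D := by simp
    rintro (a | b)
    · apply key _ (fun l => Sum.inr (π l a))
      rintro x (⟨a', l, h1, h2⟩ | ⟨a', l, h1, h2⟩)
      · cases h1; exact ⟨l, h2.symm⟩
      · cases h2
    · apply key _ (fun l => Sum.inl ((π l).symm b))
      rintro x (⟨a', l, h1, h2⟩ | ⟨a', l, h1, h2⟩)
      · cases h1
      · cases h2; exact ⟨l, by simp [h1]⟩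
  · push_cast
    have h1 : c^D ≤ (6/5)^u := by
      rw [← hcN, ← pow_mul]
      exact pow_le_pow_right₀ hc1.le hDu
    have h2 := blb_num u hu40
    have h3 : (n:ℝ) ≤ 64*u*s := by exact_mod_cast hsn2
    calc c^D * (n:ℝ) ≤ (6/5)^u * (64*u*s) := by gcongr
      _ = (64 * u * (6/5)^u) * s := by ring
      _ ≤ _ := by gcongr
  · constructor
    · intro v h
      rcases h with h | h
      · exact hT1 _ h
      · exact lt_irrefl _ h.2
    · intro x y hxy
      have hne : e.symm x ≠ e.symm y := fun h => hxy (e.symm.injective h)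
      change (T (e.symm x).1 (e.symm y).1 ∨ ((e.symm x).1 = (e.symm y).1 ∧ (e.symm x).2 < (e.symm y).2))
        ↔ ¬ (T (e.symm y).1 (e.symm x).1 ∨ ((e.symm y).1 = (e.symm x).1 ∧ (e.symm y).2 < (e.symm x).2))
      generalize e.symm x = p at hne
      generalize e.symm y = q at hne
      obtain ⟨p1, p2⟩ := p
      obtain ⟨q1, q2⟩ := q
      simp only
      by_cases h : p1 = q1
      · subst h
        have h2 : p2 ≠ q2 := fun h => hne (by rw [h])
        simp only [hT1, false_or, true_and, not_lt]
        exact ⟨le_of_lt, fun h => lt_of_le_of_ne h h2⟩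
      · simp only [h, Ne.symm h, false_and, or_false]
        exact hT2 _ _ h
  · intro A B
    constructor
    · rintro hA hB ⟨φ, hinj, hhom⟩
      let fA : Fin n → Fin (2^u) := fun a => (e.symm (φ (Sum.inl a))).1
      let fB : Fin n → Fin (2^u) := fun a => (e.symm (φ (Sum.inr a))).1
      have hfib : ∀ (ι : Fin n → Fin n ⊕ Fin n), Function.Injective ι → ∀ C : Finset (Fin n),
          (∀ a ∈ C, ι a ∈ ((Sum.inl '' (A : Set (Fin n))) ∪ (Sum.inr '' (B : Set (Fin n))))) →
          ∀ i, (C.filter (fun a => (e.symm (φ (ι a))).1 = i)).card ≤ s := by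
        intro ι hι C hC i
        calc _ ≤ (Finset.univ : Finset (Fin s)).card := by
              apply Finset.card_le_card_of_injOn (fun a => (e.symm (φ (ι a))).2)
              · intro a _; exact Finset.mem_coe.2 (Finset.mem_univ _)
              · intro a ha b hb hab
                have ha := Finset.mem_filter.1 (Finset.mem_coe.1 ha)
                have hb := Finset.mem_filter.1 (Finset.mem_coe.1 hb)
                apply hι
                apply hinj (hC a ha.1) (hC b hb.1)
                apply e.symm.injective
                exact Prod.ext (ha.2.trans hb.2.symm) hab
          _ = s := by simp
      have hrows := blb_rows u s n (by omega) hsn hn0 T hT3 fA fB A B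
        (hfib Sum.inl Sum.inl_injective A (fun a ha => Or.inl ⟨a, ha, rfl⟩))
        (hfib Sum.inr Sum.inr_injective B (fun a ha => Or.inr ⟨a, ha, rfl⟩)) hA hB
      obtain ⟨l, a, hla⟩ := hπ (fA, fB, A, B, false) (by
        refine hrows.trans ?_
        norm_cast
        apply Finset.card_le_card
        intro a ha
        rw [Finset.mem_filter] at ha ⊢
        refine ⟨Finset.mem_univ _, ?_⟩
        simp only [F, ha.1, if_true, Bool.false_eq_true, false_or]
        exact ha.2)
      simp only [F] at hla
      split_ifs at hla with haA
      · simp only [Finset.mem_filter, Bool.false_eq_true, false_or] at hla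
        have hadj := hhom (Sum.inl a) (Or.inl ⟨a, haA, rfl⟩) (Sum.inr (π l a))
          (Or.inr ⟨_, hla.1, rfl⟩) ⟨a, l, rfl, rfl⟩
        have hTba := hla.2
        have hne : fB (π l a) ≠ fA a := fun h => hT1 _ (h ▸ hTba)
        rcases hadj with h | h
        · exact (hT2 _ _ hne).1 hTba h
        · exact hne h.1.symm
      · simp at hla
    · intro hA hB
      have hk : 0 < 2^u := by positivity
      obtain ⟨l, a, hla⟩ := hπ (fun _ => ⟨0, hk⟩, fun _ => ⟨0, hk⟩, A, B, true) (by
        have hA' : (n:ℝ)/100 ≤ A.card := by norm_num at hA; linarith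
        have hB' : (n:ℝ)/100 ≤ B.card := by norm_num at hB; linarith
        refine hA'.trans ?_
        norm_cast
        apply Finset.card_le_card
        intro a ha
        rw [Finset.mem_filter]
        refine ⟨Finset.mem_univ _, ?_⟩
        simpa [F, ha] using hB')
      simp only [F] at hla
      split_ifs at hla with haA
      · exact ⟨a, haA, π l a, (Finset.mem_filter.1 hla).1, a, l, rfl, rfl⟩
      · simp at hla
end
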